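/- arXiv:1506.03430 — 4 statements merged into one kernel-verified Lean document; each statement's English description precedes it below -/
import Mathlib

section
/- There exists a universal constant C > 0 such that the following holds. Suppose θ* ∈ M satisfies θ*_{ij} = θ*_i for some nondecreasing vector (θ*_1,…,θ*_{n1}) ∈ C_{n1} and all i, j, and suppose n·D(θ*) ≥ 2σ² where D(θ*) = (θ*_{n1 n2} − θ*_{11})². Then the isotonic least squares estimator satisfies R(θ*, θ̂) ≤ C·(log n)⁸·( σ² sqrt(D(θ*)) / n )^{2/3}. -/
open MeasureTheory ProbabilityTheory

noncomputable section

/-- The set of isotonic (coordinatewise nondecreasing) `n1 × n2` matrices. -/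
def Isotonic {n1 n2 : ℕ} (θ : Fin n1 → Fin n2 → ℝ) : Prop :=
  ∀ ⦃i k : Fin n1⦄ ⦃j l : Fin n2⦄, i ≤ k → j ≤ l → θ i j ≤ θ k l

/-- Squared Frobenius norm of a matrix. -/
def frobSq {n1 n2 : ℕ} (θ : Fin n1 → Fin n2 → ℝ) : ℝ :=
  ∑ i, ∑ j, θ i j ^ 2

/-- The law of an `n1 × n2` matrix with i.i.d. `N(0, σ²)` entries. -/
def noiseMeasure (n1 n2 : ℕ) (σ : ℝ) : Measure (Fin n1 → Fin n2 → ℝ) :=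
  Measure.pi fun _ => Measure.pi fun _ => gaussianReal 0 ⟨σ ^ 2, sq_nonneg σ⟩

/-- `lse` is the least squares estimator: for every data matrix `y`, `lse y` minimizes
the squared Frobenius distance to `y` over the cone of isotonic matrices. -/
def IsLSE {n1 n2 : ℕ} (lse : (Fin n1 → Fin n2 → ℝ) → Fin n1 → Fin n2 → ℝ) : Prop :=
  ∀ y, Isotonic (lse y) ∧ ∀ θ, Isotonic θ → frobSq (y - lse y) ≤ frobSq (y - θ)

/-- The risk `R(θ*, est) = E ‖est(θ* + ε) − θ*‖² / n`, where `ε` has i.i.d. `N(0,σ²)`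
entries and `n = n1 n2`. -/
def risk {n1 n2 : ℕ} (σ : ℝ) (θstar : Fin n1 → Fin n2 → ℝ)
    (est : (Fin n1 → Fin n2 → ℝ) → Fin n1 → Fin n2 → ℝ) : ℝ :=
  (∫ ε, frobSq (est (θstar + ε) - θstar) ∂noiseMeasure n1 n2 σ) / (n1 * n2)

/-- `D(θ) = (θ_{n1 n2} − θ_{11})²`, the squared range of an isotonic matrix. -/
def Dmat {n1 n2 : ℕ} (h1 : 0 < n1) (h2 : 0 < n2) (θ : Fin n1 → Fin n2 → ℝ) : ℝ :=
  (θ ⟨n1 - 1, Nat.sub_lt h1 one_pos⟩ ⟨n2 - 1, Nat.sub_lt h2 one_pos⟩ - θ ⟨0, h1⟩ ⟨0, h2⟩) ^ 2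

/-- Every rectangle sum of `e` inside the `m × N` grid is at most `Z` times the square root of
the area of the rectangle. -/
def RectBound (e : ℕ → ℕ → ℝ) (m N : ℕ) (Z : ℝ) : Prop :=
  ∀ a b c d : ℕ, a ≤ b → b ≤ m → c ≤ d → d ≤ N →
    |∑ r ∈ Finset.Ico a b, ∑ s ∈ Finset.Ico c d, e r s| ≤
      Z * √(((b - a : ℕ) : ℝ) * ((d - c : ℕ) : ℝ))

theorem sqrt_add_sqrt_le (A B : ℝ) (hA : 0 ≤ A) (hB : 0 ≤ B) : √A + √B ≤ √(2 * (A + B)) := by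
  apply Real.le_sqrt_of_sq_le
  nlinarith [Real.sq_sqrt hA, Real.sq_sqrt hB, sq_nonneg (√A - √B)]

/-- A part of a Young diagram that lies in a `2 ^ k × l` box has small sum. -/
theorem abs_sum_boxed_diagram_le {e : ℕ → ℕ → ℝ} {Z : ℝ} {m N : ℕ} (hZ : 0 ≤ Z)
    (he : RectBound e m N Z) {lam : ℕ → ℕ} (hanti : Antitone lam) (hN : ∀ r, lam r ≤ N)
    (h0 : ∀ r, m ≤ r → lam r = 0) (k : ℕ) :
    ∀ a c l : ℕ, (∀ r ∈ Finset.Ico a (a + 2 ^ k), c ≤ lam r ∧ lam r ≤ c + l) →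
      |∑ r ∈ Finset.Ico a (a + 2 ^ k), ∑ s ∈ Finset.Ico c (lam r), e r s| ≤
        Z * (k + 1) * √(2 ^ k * l) := by
  induction k with
  | zero =>
    intro a c l h
    obtain ⟨h1, h2⟩ := h a (by simp)
    by_cases ham : a < m
    · have h := he a (a + 2 ^ 0) c (lam a) (by simp) (by simpa using ham) h1 (hN a)
      simp only [pow_zero, Nat.Ico_succ_singleton, Finset.sum_singleton, Nat.cast_zero, zero_add,
        mul_one, one_mul, add_tsub_cancel_left, Nat.cast_one] at h ⊢
      refine h.trans ?_
      gcongr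
      omega
    · have := h0 a (by omega)
      simp only [pow_zero, Nat.Ico_succ_singleton, Finset.sum_singleton, this]
      simp only [Finset.Ico_eq_empty_of_le (Nat.zero_le c), Finset.sum_empty, abs_zero]
      positivity
  | succ k ih =>
    intro a c l h
    have hk : 0 < 2 ^ k := by positivity
    have h2k : 2 ^ (k + 1) = 2 ^ k + 2 ^ k := by ring
    obtain ⟨hm1, hm2⟩ := h (a + 2 ^ k) (by simp; omega)
    set mid := lam (a + 2 ^ k) with hmid
    have hfst : ∀ r ∈ Finset.Ico a (a + 2 ^ k), mid ≤ lam r ∧ lam r ≤ c + l := by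
      intro r hr
      rw [Finset.mem_Ico] at hr
      exact ⟨hanti (by omega), (h r (by simp; omega)).2⟩
    have hsnd : ∀ r ∈ Finset.Ico (a + 2 ^ k) (a + 2 ^ k + 2 ^ k), c ≤ lam r ∧ lam r ≤ mid := by
      intro r hr
      rw [Finset.mem_Ico] at hr
      exact ⟨(h r (by simp; omega)).1, hanti (by omega)⟩
    have b1 := ih a mid (c + l - mid) (fun r hr => ⟨(hfst r hr).1, by have := hfst r hr; omega⟩)
    have b2 := ih (a + 2 ^ k) c (mid - c)
      (fun r hr => ⟨(hsnd r hr).1, by have := hsnd r hr; omega⟩)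
    have b3 : |∑ r ∈ Finset.Ico a (a + 2 ^ k), ∑ s ∈ Finset.Ico c mid, e r s| ≤
        Z * √(2 ^ k * ((mid - c : ℕ) : ℝ)) := by
      by_cases ham : a + 2 ^ k ≤ m
      · have := he a (a + 2 ^ k) c mid (by omega) ham hm1 (hN _)
        simpa using this
      · have : mid = 0 := h0 _ (by omega)
        simp only [this, Finset.Ico_eq_empty_of_le (Nat.zero_le c), Finset.sum_empty,
          Finset.sum_const_zero, abs_zero]
        positivity
    have hsplit : ∑ r ∈ Finset.Ico a (a + 2 ^ (k + 1)), ∑ s ∈ Finset.Ico c (lam r), e r s =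
        ∑ r ∈ Finset.Ico a (a + 2 ^ k), ∑ s ∈ Finset.Ico c mid, e r s +
        ∑ r ∈ Finset.Ico a (a + 2 ^ k), ∑ s ∈ Finset.Ico mid (lam r), e r s +
        ∑ r ∈ Finset.Ico (a + 2 ^ k) (a + 2 ^ k + 2 ^ k), ∑ s ∈ Finset.Ico c (lam r), e r s := by
      rw [h2k, ← add_assoc, ← Finset.sum_Ico_consecutive _ (Nat.le_add_right a (2 ^ k))
        (Nat.le_add_right (a + 2 ^ k) (2 ^ k)), ← Finset.sum_add_distrib]
      congr 1
      refine Finset.sum_congr rfl fun r hr => ?_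
      rw [Finset.sum_Ico_consecutive _ hm1 (hfst r hr).1]
    set x : ℝ := ((mid - c : ℕ) : ℝ) with hx
    set y : ℝ := ((c + l - mid : ℕ) : ℝ) with hy
    have hxy : (l : ℝ) = x + y := by
      rw [hx, hy, ← Nat.cast_add]; congr 1; omega
    have hx0 : 0 ≤ x := Nat.cast_nonneg _
    have hy0 : 0 ≤ y := Nat.cast_nonneg _
    have c1 : √(2 ^ k * x) + √(2 ^ k * y) ≤ √(2 ^ (k + 1) * l) := by
      refine (sqrt_add_sqrt_le _ _ (by positivity) (by positivity)).trans (le_of_eq ?_)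
      rw [hxy]; ring_nf
    have c2 : √(2 ^ k * x) ≤ √(2 ^ (k + 1) * l) := by
      have := Real.sqrt_nonneg (2 ^ k * y); linarith
    rw [hsplit]
    calc _ ≤ Z * √(2 ^ k * x) + Z * (k + 1) * √(2 ^ k * y) + Z * (k + 1) * √(2 ^ k * x) :=
          (abs_add_three _ _ _).trans (by linarith)
      _ = Z * √(2 ^ k * x) + Z * (k + 1) * (√(2 ^ k * x) + √(2 ^ k * y)) := by ring
      _ ≤ Z * √(2 ^ (k + 1) * l) + Z * (k + 1) * √(2 ^ (k + 1) * l) := by gcongr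
      _ = _ := by push_cast; ring

/-- The sum over a Young diagram of size `S` is at most `Z √S` up to logarithmic factors. -/
theorem abs_sum_diagram_le {e : ℕ → ℕ → ℝ} {Z : ℝ} {m N K : ℕ} (hZ : 0 ≤ Z)
    (he : RectBound e m N Z) {lam : ℕ → ℕ} (hanti : Antitone lam) (hN : ∀ r, lam r ≤ N)
    (h0 : ∀ r, m ≤ r → lam r = 0) (hK : m ≤ 2 ^ K) :
    |∑ r ∈ Finset.range m, ∑ s ∈ Finset.range (lam r), e r s| ≤
      Z * (K + 1) ^ 2 * √((∑ r ∈ Finset.range m, lam r : ℕ) : ℝ) := by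
  set S := ∑ r ∈ Finset.range m, lam r with hS
  have hlam : ∀ r, (r + 1) * lam r ≤ S := by
    intro r
    by_cases hr : r < m
    · calc (r + 1) * lam r = ∑ i ∈ Finset.range (r + 1), lam r := by simp
        _ ≤ ∑ i ∈ Finset.range (r + 1), lam i :=
          Finset.sum_le_sum fun i hi => hanti (by rw [Finset.mem_range] at hi; omega)
        _ ≤ S := Finset.sum_le_sum_of_subset (Finset.range_subset_range.2 (by omega))
    · simp [h0 r (by omega)]
  have hext : ∑ r ∈ Finset.range m, ∑ s ∈ Finset.range (lam r), e r s =
      ∑ r ∈ Finset.Ico 0 (2 ^ K), ∑ s ∈ Finset.Ico 0 (lam r), e r s := by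
    simp only [← Finset.range_eq_Ico]
    refine Finset.sum_subset (Finset.range_subset_range.2 hK) fun r _ hr => ?_
    rw [h0 r (by simpa using hr)]; simp
  have key : ∀ K : ℕ, |∑ r ∈ Finset.Ico 0 (2 ^ K), ∑ s ∈ Finset.Ico 0 (lam r), e r s| ≤
      Z * (K + 1) ^ 2 * √(S : ℝ) := by
    intro K
    induction K with
    | zero =>
      have := abs_sum_boxed_diagram_le hZ he hanti hN h0 0 0 0 (lam 0)
        (by intro r hr; simp at hr; subst hr; simp)
      simp only [pow_zero, zero_add, Nat.cast_zero, mul_one, one_mul, one_pow] at this ⊢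
      refine this.trans ?_
      gcongr
      simpa using hlam 0
    | succ K ih =>
      have h1 := abs_sum_boxed_diagram_le hZ he hanti hN h0 K (2 ^ K) 0 (lam (2 ^ K))
        (by intro r hr; rw [Finset.mem_Ico] at hr; simpa using hanti hr.1)
      have h2 : √(2 ^ K * (lam (2 ^ K) : ℝ)) ≤ √(S : ℝ) := by
        apply Real.sqrt_le_sqrt
        have : 2 ^ K * lam (2 ^ K) ≤ S := le_trans (by gcongr; omega) (hlam (2 ^ K))
        exact_mod_cast this
      rw [show 2 ^ (K + 1) = 2 ^ K + 2 ^ K by ring,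
        ← Finset.sum_Ico_consecutive _ (Nat.zero_le _) (Nat.le_add_right (2 ^ K) (2 ^ K))]
      calc _ ≤ Z * (K + 1) ^ 2 * √(S : ℝ) + Z * (K + 1) * √(2 ^ K * (lam (2 ^ K) : ℝ)) :=
            (abs_add_le _ _).trans (add_le_add ih h1)
        _ ≤ Z * (K + 1) ^ 2 * √(S : ℝ) + Z * (K + 1) * √(S : ℝ) := by gcongr
        _ = Z * ((K + 1) ^ 2 + (K + 1)) * √(S : ℝ) := by ring
        _ ≤ _ := by
          gcongr
          push_cast
          nlinarith [(Nat.cast_nonneg K : (0 : ℝ) ≤ K)]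
  rw [hext]
  exact key K

/-- A summation-by-parts bound: control of the sums of `e` over the level sets of `w` controls
the pairing of `e` with `w`. -/
theorem sum_mul_le_of_levelSets {ι : Type*} (e : ι → ℝ) (W : ℝ) (hW : 0 ≤ W) (s : Finset ι) :
    ∀ w : ι → ℝ, (∀ x ∈ s, 0 ≤ w x) →
    (∀ t, 0 < t → ∑ x ∈ s with t ≤ w x, e x ≤ W * √((s.filter fun x => t ≤ w x).card : ℝ)) →
    ∑ x ∈ s, e x * w x ≤ W * ∑ x ∈ s, w x / √((s.filter fun y => w x ≤ w y).card : ℝ) := by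
  classical
  induction s using Finset.strongInduction with
  | H s ih =>
  intro w hw hlev
  rcases s.eq_empty_or_nonempty with rfl | hne
  · simp
  obtain ⟨x0, hx0, hmin⟩ := s.exists_min_image w hne
  set μ := w x0 with hμ
  have hμ0 : 0 ≤ μ := hw x0 hx0
  set s' := s.filter fun x => μ < w x with hs'
  have hss : s' ⊂ s := by
    refine Finset.filter_ssubset.2 ⟨x0, hx0, lt_irrefl _⟩
  have hfil : ∀ t, 0 < t → (s'.filter fun x => t ≤ w x - μ) = s.filter fun x => t + μ ≤ w x := by
    intro t ht
    ext x
    simp only [hs', Finset.mem_filter]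
    constructor
    · rintro ⟨⟨h1, h2⟩, h3⟩; exact ⟨h1, by linarith⟩
    · rintro ⟨h1, h2⟩; exact ⟨⟨h1, by linarith⟩, by linarith⟩
  have hIH := ih s' hss (fun x => w x - μ)
    (fun x hx => by have := (Finset.mem_filter.1 hx).2; linarith)
    (fun t ht => by
      simp only [hfil t ht]
      exact hlev (t + μ) (by linarith))
  have hcard : ∀ x ∈ s', (s'.filter fun y => w x - μ ≤ w y - μ) =
      s.filter fun y => w x ≤ w y := by
    intro x hx
    have h := (Finset.mem_filter.1 hx).2
    rw [hfil _ (by linarith)]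
    simp
  have e1 : ∑ x ∈ s, e x * w x = μ * ∑ x ∈ s, e x + ∑ x ∈ s', e x * (w x - μ) := by
    rw [hs', Finset.sum_filter, Finset.mul_sum, ← Finset.sum_add_distrib]
    refine Finset.sum_congr rfl fun x hx => ?_
    split_ifs with h
    · ring
    · have : w x = μ := le_antisymm (not_lt.1 h) (hmin x hx)
      rw [this]; ring
  have e2 : ∑ x ∈ s, w x / √((s.filter fun y => w x ≤ w y).card : ℝ) =
      μ * ∑ x ∈ s, 1 / √((s.filter fun y => w x ≤ w y).card : ℝ) +
      ∑ x ∈ s', (w x - μ) / √((s'.filter fun y => w x - μ ≤ w y - μ).card : ℝ) := by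
    rw [Finset.sum_congr rfl fun x (hx : x ∈ s') => by rw [hcard x hx], hs', Finset.sum_filter, Finset.mul_sum, ← Finset.sum_add_distrib]
    refine Finset.sum_congr rfl fun x hx => ?_
    split_ifs with h
    · ring
    · have : w x = μ := le_antisymm (not_lt.1 h) (hmin x hx)
      rw [this]; ring
  have hbase : μ * ∑ x ∈ s, e x ≤
      W * (μ * ∑ x ∈ s, 1 / √((s.filter fun y => w x ≤ w y).card : ℝ)) := by
    rcases hμ0.eq_or_lt with h | h
    · rw [← h]; simp
    have h1 := hlev μ h
    rw [Finset.filter_true_of_mem hmin] at h1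
    have h2 : √(s.card : ℝ) ≤ ∑ x ∈ s, 1 / √((s.filter fun y => w x ≤ w y).card : ℝ) := by
      calc √(s.card : ℝ) = ∑ x ∈ s, 1 / √(s.card : ℝ) := by
            rw [Finset.sum_const, nsmul_eq_mul, mul_one_div, Real.div_sqrt]
        _ ≤ _ := by
          refine Finset.sum_le_sum fun x hx => ?_
          have : 0 < (s.filter fun y => w x ≤ w y).card :=
            Finset.card_pos.2 ⟨x, by simp [hx]⟩
          gcongr
          exact Finset.filter_subset _ _
    calc μ * ∑ x ∈ s, e x ≤ μ * (W * √(s.card : ℝ)) := by gcongr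
      _ ≤ μ * (W * ∑ x ∈ s, 1 / √((s.filter fun y => w x ≤ w y).card : ℝ)) := by gcongr
      _ = _ := by ring
  rw [e1, e2, mul_add]
  exact add_le_add hbase hIH

/-- The reciprocals of the ranks of the elements of a finite set add up to at most a harmonic
number, ties being counted in favour of larger ranks. -/
theorem sum_inv_rank_le_harmonic {ι : Type*} (w : ι → ℝ) (s : Finset ι) :
    ∑ x ∈ s, (1 : ℝ) / ((s.filter fun y => w x ≤ w y).card : ℝ) ≤ (harmonic s.card : ℝ) := by
  classical
  induction s using Finset.induction_on_min_value w with
  | empty => simp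
  | insert a s ha hmin ih =>
    rw [Finset.sum_insert ha, Finset.card_insert_of_notMem ha, harmonic_succ, Rat.cast_add,
      add_comm]
    have hall : ((insert a s).filter fun y => w a ≤ w y) = insert a s :=
      Finset.filter_true_of_mem fun y hy => by
        rcases Finset.mem_insert.1 hy with rfl | hy
        · exact le_rfl
        · exact hmin y hy
    refine add_le_add (le_trans (Finset.sum_le_sum fun x hx => ?_) ih) ?_
    · have : 0 < (s.filter fun y => w x ≤ w y).card := Finset.card_pos.2 ⟨x, by simp [hx]⟩
      gcongr
      exact Finset.subset_insert _ _
    · rw [hall, Finset.card_insert_of_notMem ha]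
      simp

theorem filter_range_eq_range_card {N : ℕ} {p : ℕ → Prop} [DecidablePred p]
    (h : ∀ a b, a ≤ b → b < N → p b → p a) :
    (Finset.range N).filter p = Finset.range ((Finset.range N).filter p).card := by
  ext s
  rw [Finset.mem_range]
  constructor
  · intro hs
    rw [Finset.mem_filter, Finset.mem_range] at hs
    have : Finset.range (s + 1) ⊆ (Finset.range N).filter p := by
      intro a ha
      rw [Finset.mem_range] at ha
      rw [Finset.mem_filter, Finset.mem_range]
      exact ⟨by omega, h a s (by omega) hs.1 hs.2⟩
    simpa using Finset.card_le_card this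
  · intro hs
    by_contra hn
    have : (Finset.range N).filter p ⊆ Finset.range s := by
      intro a ha
      rw [Finset.mem_filter, Finset.mem_range] at ha
      rw [Finset.mem_range]
      by_contra hsa
      exact hn (Finset.mem_filter.2 ⟨Finset.mem_range.2 (by omega),
        h s a (by omega) ha.1 ha.2⟩)
    have := Finset.card_le_card this
    rw [Finset.card_range] at this
    omega

/-- `w` is nonincreasing in both coordinates on the `m × N` grid. -/
def AntitoneGrid (w : ℕ → ℕ → ℝ) (m N : ℕ) : Prop :=
  ∀ ⦃r r' s s' : ℕ⦄, r ≤ r' → r' < m → s ≤ s' → s' < N → w r' s' ≤ w r s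

theorem sum_levelSet_le {e w : ℕ → ℕ → ℝ} {Z : ℝ} {m N K : ℕ} (hZ : 0 ≤ Z)
    (he : RectBound e m N Z) (hw : AntitoneGrid w m N) (hK : m ≤ 2 ^ K) (t : ℝ) :
    ∑ x ∈ Finset.range m ×ˢ Finset.range N with t ≤ w x.1 x.2, e x.1 x.2 ≤
      Z * (K + 1) ^ 2 *
        √(((Finset.range m ×ˢ Finset.range N).filter fun x => t ≤ w x.1 x.2).card : ℝ) := by
  set lam : ℕ → ℕ := fun r =>
    if r < m then ((Finset.range N).filter fun s => t ≤ w r s).card else 0 with hlam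
  have hrow : ∀ r ∈ Finset.range m,
      (Finset.range N).filter (fun s => t ≤ w r s) = Finset.range (lam r) := by
    intro r hr
    rw [Finset.mem_range] at hr
    simp only [hlam, hr, if_true]
    exact filter_range_eq_range_card fun a b hab hb ht => ht.trans (hw le_rfl hr hab hb)
  have hanti : Antitone lam := by
    intro r r' hrr
    simp only [hlam]
    split_ifs with h1 h2 h2
    · refine Finset.card_le_card fun s hs => ?_
      rw [Finset.mem_filter] at hs ⊢
      exact ⟨hs.1, hs.2.trans (hw hrr h1 le_rfl (Finset.mem_range.1 hs.1))⟩
    · omega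
    · exact Nat.zero_le _
    · exact le_rfl
  have hN : ∀ r, lam r ≤ N := by
    intro r
    simp only [hlam]
    split_ifs
    · exact (Finset.card_filter_le _ _).trans (by simp)
    · exact Nat.zero_le _
  have h0 : ∀ r, m ≤ r → lam r = 0 := fun r hr => by simp [hlam, not_lt.2 hr]
  have hsum : ∑ x ∈ Finset.range m ×ˢ Finset.range N with t ≤ w x.1 x.2, e x.1 x.2 =
      ∑ r ∈ Finset.range m, ∑ s ∈ Finset.range (lam r), e r s := by
    rw [Finset.sum_filter, Finset.sum_product]
    refine Finset.sum_congr rfl fun r hr => ?_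
    rw [← hrow r hr, Finset.sum_filter]
  have hcard : ((Finset.range m ×ˢ Finset.range N).filter fun x => t ≤ w x.1 x.2).card =
      ∑ r ∈ Finset.range m, lam r := by
    rw [Finset.card_filter, Finset.sum_product]
    refine Finset.sum_congr rfl fun r hr => ?_
    rw [← Finset.card_filter, hrow r hr, Finset.card_range]
  rw [hsum, hcard]
  exact (le_abs_self _).trans (abs_sum_diagram_le hZ he hanti hN h0 hK)

theorem two_mul_sum_mul_posPart_le {e w : ℕ → ℕ → ℝ} {Z : ℝ} {m N K : ℕ} (hZ : 0 ≤ Z)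
    (he : RectBound e m N Z) (hw : AntitoneGrid w m N) (hK : m ≤ 2 ^ K) :
    2 * ∑ r ∈ Finset.range m, ∑ s ∈ Finset.range N, e r s * max (w r s) 0 ≤
      ∑ r ∈ Finset.range m, ∑ s ∈ Finset.range N, max (w r s) 0 ^ 2 / 4 +
        4 * (Z * (K + 1) ^ 2) ^ 2 * harmonic (m * N) := by
  set W := Z * ((K : ℝ) + 1) ^ 2 with hWdef
  have hW : 0 ≤ W := by positivity
  have hw' : AntitoneGrid (fun r s => max (w r s) 0) m N := fun r r' s s' h1 h2 h3 h4 =>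
    max_le_max (hw h1 h2 h3 h4) le_rfl
  set S := Finset.range m ×ˢ Finset.range N with hS
  set u : ℕ × ℕ → ℝ := fun x => max (w x.1 x.2) 0 with hu
  have h1 := sum_mul_le_of_levelSets (fun x : ℕ × ℕ => e x.1 x.2) W hW S u
    (fun x _ => le_max_right _ _) (fun t _ => sum_levelSet_le hZ he hw' hK t)
  have h2 := sum_inv_rank_le_harmonic u S
  have h3 : ∀ x ∈ S, 2 * (W * (u x / √((S.filter fun y => u x ≤ u y).card : ℝ))) ≤
      u x ^ 2 / 4 + 4 * W ^ 2 * (1 / ((S.filter fun y => u x ≤ u y).card : ℝ)) := by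
    intro x hx
    set c : ℝ := ((S.filter fun y => u x ≤ u y).card : ℝ)
    have hc : 0 ≤ c := Nat.cast_nonneg _
    have : (1 / √c) ^ 2 = 1 / c := by rw [div_pow, Real.sq_sqrt hc, one_pow]
    rw [← this, div_eq_mul_one_div]
    nlinarith [sq_nonneg (u x / 2 - 2 * (W * (1 / √c)))]
  have h4 := Finset.sum_le_sum h3
  rw [Finset.sum_add_distrib, ← Finset.mul_sum, ← Finset.mul_sum, ← Finset.mul_sum] at h4
  have hcard : S.card = m * N := by simp [hS]
  rw [hcard] at h2
  have h5 := mul_le_mul_of_nonneg_left h2 (show 0 ≤ 4 * W ^ 2 by positivity)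
  simp only [hS, hu, Finset.sum_product] at h1 h4 h5 ⊢
  linarith

theorem RectBound.neg {e : ℕ → ℕ → ℝ} {m N : ℕ} {Z : ℝ} (he : RectBound e m N Z) :
    RectBound (fun r s => -e r s) m N Z := by
  intro a b c d h1 h2 h3 h4
  simpa only [Finset.sum_neg_distrib, abs_neg] using he a b c d h1 h2 h3 h4

theorem RectBound.reflect {e : ℕ → ℕ → ℝ} {m N : ℕ} {Z : ℝ} (he : RectBound e m N Z) :
    RectBound (fun r s => e (m - 1 - r) (N - 1 - s)) m N Z := by
  intro a b c d h1 h2 h3 h4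
  rcases h1.eq_or_lt with rfl | h1'
  · simp
  rcases h3.eq_or_lt with rfl | h3'
  · simp
  have := he (m - b) (m - a) (N - d) (N - c) (by omega) (by omega) (by omega) (by omega)
  rw [show m - a - (m - b) = b - a by omega, show N - c - (N - d) = d - c by omega] at this
  refine le_of_eq_of_le ?_ this
  congr 1
  rw [Finset.sum_Ico_reflect (fun r => ∑ s ∈ Finset.Ico c d, e r (N - 1 - s)) a
    (show b ≤ m - 1 + 1 by omega)]
  rw [show m - 1 + 1 = m by omega]
  refine Finset.sum_congr rfl fun r _ => ?_
  rw [Finset.sum_Ico_reflect (fun s => e r s) c (show d ≤ N - 1 + 1 by omega),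
    show N - 1 + 1 = N by omega]

theorem sum_grid_reflect (f : ℕ → ℕ → ℝ) (m N : ℕ) :
    ∑ r ∈ Finset.range m, ∑ s ∈ Finset.range N, f (m - 1 - r) (N - 1 - s) =
      ∑ r ∈ Finset.range m, ∑ s ∈ Finset.range N, f r s := by
  rw [Finset.sum_range_reflect (fun r => ∑ s ∈ Finset.range N, f r (N - 1 - s)) m]
  refine Finset.sum_congr rfl fun r _ => ?_
  exact Finset.sum_range_reflect (fun s => f r s) N

/-- The pairing of a noise matrix with a monotone matrix on one block. -/
theorem two_mul_sum_mul_le {e w : ℕ → ℕ → ℝ} {Z : ℝ} {m N K : ℕ} (hZ : 0 ≤ Z)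
    (he : RectBound e m N Z) (hw : AntitoneGrid w m N) (hK : m ≤ 2 ^ K) :
    2 * ∑ r ∈ Finset.range m, ∑ s ∈ Finset.range N, e r s * w r s ≤
      ∑ r ∈ Finset.range m, ∑ s ∈ Finset.range N, w r s ^ 2 / 4 +
        8 * (Z * (K + 1) ^ 2) ^ 2 * harmonic (m * N) := by
  have hpos := two_mul_sum_mul_posPart_le hZ he hw hK
  have hw' : AntitoneGrid (fun r s => -w (m - 1 - r) (N - 1 - s)) m N :=
    fun r r' s s' h1 h2 h3 h4 => neg_le_neg (hw (by omega) (by omega) (by omega) (by omega))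
  have hneg := two_mul_sum_mul_posPart_le hZ he.reflect.neg hw' hK
  rw [sum_grid_reflect (fun r s => -e r s * max (-w r s) 0),
    sum_grid_reflect (fun r s => max (-w r s) 0 ^ 2 / 4)] at hneg
  have e1 : ∑ r ∈ Finset.range m, ∑ s ∈ Finset.range N, e r s * w r s =
      ∑ r ∈ Finset.range m, ∑ s ∈ Finset.range N, e r s * max (w r s) 0 +
      ∑ r ∈ Finset.range m, ∑ s ∈ Finset.range N, -e r s * max (-w r s) 0 := by
    simp only [← Finset.sum_add_distrib]
    refine Finset.sum_congr rfl fun r _ => Finset.sum_congr rfl fun s _ => ?_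
    rcases le_total (w r s) 0 with h | h
    · rw [max_eq_right h, max_eq_left (by linarith)]; ring
    · rw [max_eq_left h, max_eq_right (by linarith)]; ring
  have e2 : ∑ r ∈ Finset.range m, ∑ s ∈ Finset.range N, w r s ^ 2 / 4 =
      ∑ r ∈ Finset.range m, ∑ s ∈ Finset.range N, max (w r s) 0 ^ 2 / 4 +
      ∑ r ∈ Finset.range m, ∑ s ∈ Finset.range N, max (-w r s) 0 ^ 2 / 4 := by
    simp only [← Finset.sum_add_distrib]
    refine Finset.sum_congr rfl fun r _ => Finset.sum_congr rfl fun s _ => ?_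
    rcases le_total (w r s) 0 with h | h
    · rw [max_eq_right h, max_eq_left (by linarith)]; ring
    · rw [max_eq_left h, max_eq_right (by linarith)]; ring
  rw [e1, e2]
  linarith

theorem harmonic_mono : Monotone harmonic := by
  intro a b hab
  unfold harmonic
  exact Finset.sum_le_sum_of_subset_of_nonneg (Finset.range_subset_range.2 hab)
    fun i _ _ => by positivity

theorem RectBound.shift {e : ℕ → ℕ → ℝ} {m N p m' : ℕ} {Z : ℝ} (he : RectBound e m N Z)
    (hp : p + m' ≤ m) : RectBound (fun r s => e (p + r) s) m' N Z := by
  intro a b c d h1 h2 h3 h4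
  have := he (a + p) (b + p) c d (by omega) (by omega) h3 h4
  rw [← Finset.sum_Ico_add (fun r => ∑ s ∈ Finset.Ico c d, e r s) a b p] at this
  rwa [show b + p - (a + p) = b - a by omega] at this

/-- The pairing of a noise matrix with a matrix that is monotone on each of the row blocks
`{r | q r = b}`. -/
theorem two_mul_sum_mul_le_of_blocks {E v : ℕ → ℕ → ℝ} {q : ℕ → ℕ} {Z : ℝ} {n N K k : ℕ}
    (hZ : 0 ≤ Z) (hE : RectBound E n N Z) (hK : n ≤ 2 ^ K)
    (hq : ∀ r r', r ≤ r' → r' < n → q r ≤ q r') (hqk : ∀ r < n, q r ≤ k)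
    (hv : ∀ r r' s s', r ≤ r' → r' < n → s ≤ s' → s' < N → q r = q r' → v r s ≤ v r' s') :
    2 * ∑ r ∈ Finset.range n, ∑ s ∈ Finset.range N, E r s * v r s ≤
      ∑ r ∈ Finset.range n, ∑ s ∈ Finset.range N, v r s ^ 2 / 4 +
        (k + 1) * (8 * (Z * (K + 1) ^ 2) ^ 2 * harmonic (n * N)) := by
  set P : ℕ → ℕ := fun b => ((Finset.range n).filter fun r => q r < b).card with hP
  have hPn : ∀ b, P b ≤ n := fun b => (Finset.card_filter_le _ _).trans (by simp)
  have hmem : ∀ b r, r < P b ↔ r < n ∧ q r < b := by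
    intro b r
    have := filter_range_eq_range_card (N := n) (p := fun r => q r < b)
      fun r r' h1 h2 h3 => (hq r r' h1 h2).trans_lt h3
    rw [← Finset.mem_range, hP, ← this, Finset.mem_filter, Finset.mem_range]
  set G : ℝ := 8 * (Z * (K + 1) ^ 2) ^ 2 * harmonic (n * N) with hG
  have key : ∀ b, 2 * ∑ r ∈ Finset.range (P b), ∑ s ∈ Finset.range N, E r s * v r s ≤
      ∑ r ∈ Finset.range (P b), ∑ s ∈ Finset.range N, v r s ^ 2 / 4 + b * G := by
    intro b
    induction b with
    | zero =>
      have : P 0 = 0 := by simp [hP]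
      simp [this]
    | succ b ih =>
      have hPb : P b ≤ P (b + 1) := Finset.card_le_card fun r hr => by
        rw [Finset.mem_filter] at hr ⊢
        exact ⟨hr.1, by omega⟩
      have hPb1 := hPn (b + 1)
      have hsub : P b + (P (b + 1) - P b) ≤ n := by omega
      have hblk : ∀ r, r < P (b + 1) - P b → q (P b + r) = b := by
        intro r hr
        have h1 := (hmem (b + 1) (P b + r)).1 (by omega)
        have h2 := (hmem b (P b + r)).not.1 (by omega)
        by_contra h3
        exact h2 ⟨h1.1, by omega⟩
      have hw : AntitoneGrid (fun r s => -v (P b + r) s) (P (b + 1) - P b) N :=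
        fun r r' s s' h1 h2 h3 h4 => neg_le_neg (hv _ _ _ _ (by omega) (by omega) h3 h4
          (by rw [hblk r (by omega), hblk r' h2]))
      have h := two_mul_sum_mul_le hZ (hE.shift hsub).neg hw
        (show P (b + 1) - P b ≤ 2 ^ K by omega)
      simp only [neg_mul_neg, neg_sq] at h
      have hh : ((harmonic ((P (b + 1) - P b) * N) : ℚ) : ℝ) ≤ (harmonic (n * N) : ℚ) := by
        exact_mod_cast harmonic_mono (Nat.mul_le_mul_right N (by omega))
      have hG' : 8 * (Z * ((K : ℝ) + 1) ^ 2) ^ 2 * (harmonic ((P (b + 1) - P b) * N) : ℚ) ≤ G := by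
        rw [hG]; gcongr
      rw [← Finset.sum_range_add_sum_Ico _ hPb, ← Finset.sum_range_add_sum_Ico _ hPb,
        Finset.sum_Ico_eq_sum_range, Finset.sum_Ico_eq_sum_range]
      push_cast
      linarith
  have hPk : P (k + 1) = n := by
    rw [hP]
    simp only
    rw [Finset.filter_true_of_mem fun r hr => ?_, Finset.card_range]
    exact Nat.lt_succ_of_le (hqk r (Finset.mem_range.1 hr))
  have := key (k + 1)
  rw [hPk] at this
  push_cast at this
  exact this

/-- Extension of a matrix by zero. -/
def extendZero {n1 n2 : ℕ} (f : Fin n1 → Fin n2 → ℝ) (r s : ℕ) : ℝ :=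
  if h : r < n1 ∧ s < n2 then f ⟨r, h.1⟩ ⟨s, h.2⟩ else 0

theorem extendZero_val {n1 n2 : ℕ} (f : Fin n1 → Fin n2 → ℝ) (i : Fin n1) (j : Fin n2) :
    extendZero f i j = f i j := by
  simp [extendZero]

theorem extendZero_of_lt {n1 n2 : ℕ} (f : Fin n1 → Fin n2 → ℝ) {r s : ℕ} (hr : r < n1)
    (hs : s < n2) : extendZero f r s = f ⟨r, hr⟩ ⟨s, hs⟩ := by
  simp [extendZero, hr, hs]

theorem frobSq_sub_le_of_isLSE {n1 n2 : ℕ} {lse : (Fin n1 → Fin n2 → ℝ) → Fin n1 → Fin n2 → ℝ}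
    (hlse : IsLSE lse) {θstar θ ε : Fin n1 → Fin n2 → ℝ} {q : Fin n1 → ℕ} {c : ℕ → ℝ} {k K : ℕ}
    {Z : ℝ} (hZ : 0 ≤ Z) (hε : RectBound (extendZero ε) n1 n2 Z) (hK : n1 ≤ 2 ^ K)
    (hq : Monotone q) (hqk : ∀ i, q i ≤ k) (hc : Monotone c) (hθ : ∀ i j, θ i j = c (q i)) :
    frobSq (lse (θstar + ε) - θstar) ≤ 3 * frobSq (θ - θstar) +
      2 * ((k + 1) * (8 * (Z * (K + 1) ^ 2) ^ 2 * harmonic (n1 * n2))) := by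
  set t := lse (θstar + ε) with ht
  have hiso : Isotonic t := (hlse _).1
  have hθiso : Isotonic θ := fun i k j l hik _ => by rw [hθ, hθ]; exact hc (hq hik)
  have hmin := (hlse (θstar + ε)).2 θ hθiso
  rw [← ht] at hmin
  set v := t - θ with hv
  set G := ((k : ℝ) + 1) * (8 * (Z * (K + 1) ^ 2) ^ 2 * harmonic (n1 * n2)) with hG
  have hpair : 2 * ∑ i, ∑ j, ε i j * v i j ≤ frobSq v / 4 + G := by
    have h := two_mul_sum_mul_le_of_blocks (E := extendZero ε) (v := extendZero v)
      (q := fun r => if h : r < n1 then q ⟨r, h⟩ else 0) (k := k) hZ hε hK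
      (by
        intro r r' h1 h2
        simp only [h2, show r < n1 by omega, dite_true]
        exact hq (by simpa using h1))
      (by
        intro r hr
        simp only [hr, dite_true]
        exact hqk _)
      (by
        intro r r' s s' h1 h2 h3 h4 h5
        have h2' : r < n1 := by omega
        have h4' : s < n2 := by omega
        simp only [h2, h2', dite_true] at h5
        rw [extendZero_of_lt v h2' h4', extendZero_of_lt v h2 h4]
        simp only [hv, Pi.sub_apply, hθ, h5]
        have := hiso (show (⟨r, h2'⟩ : Fin n1) ≤ ⟨r', h2⟩ by simpa using h1)
          (show (⟨s, h4'⟩ : Fin n2) ≤ ⟨s', h4⟩ by simpa using h3)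
        linarith)
    simp only [Finset.sum_range, extendZero_val] at h
    simpa only [frobSq, Finset.sum_div] using h
  have e1 : frobSq (θstar + ε - t) = frobSq (t - θstar) - 2 * ∑ i, ∑ j, ε i j * v i j
      + (frobSq (θstar + ε - θ) - frobSq (θ - θstar)) := by
    simp only [frobSq, Finset.mul_sum, ← Finset.sum_sub_distrib, ← Finset.sum_add_distrib]
    refine Finset.sum_congr rfl fun i _ => Finset.sum_congr rfl fun j _ => ?_
    simp only [hv, Pi.sub_apply, Pi.add_apply]
    ring
  have e2 : frobSq v ≤ 2 * frobSq (t - θstar) + 2 * frobSq (θ - θstar) := by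
    simp only [frobSq, Finset.mul_sum, ← Finset.sum_add_distrib]
    refine Finset.sum_le_sum fun i _ => Finset.sum_le_sum fun j _ => ?_
    simp only [hv, Pi.sub_apply]
    nlinarith [sq_nonneg (t i j - θstar i j + (θ i j - θstar i j))]
  linarith

theorem noiseMeasure_eq (n1 n2 : ℕ) (σ : ℝ) : noiseMeasure n1 n2 σ =
    Measure.pi fun _ => Measure.pi fun _ => gaussianReal 0 (σ ^ 2).toNNReal := by
  have : (σ ^ 2).toNNReal = (⟨σ ^ 2, sq_nonneg σ⟩ : NNReal) := Real.toNNReal_of_nonneg _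
  rw [this]
  rfl

instance isProbabilityMeasure_noiseMeasure (n1 n2 : ℕ) (σ : ℝ) :
    IsProbabilityMeasure (noiseMeasure n1 n2 σ) := by
  rw [noiseMeasure_eq]; infer_instance

theorem exp_sum_sum_eq_prod {n1 n2 : ℕ} (α : Fin n1 → Fin n2 → ℝ) (ε : Fin n1 → Fin n2 → ℝ) :
    Real.exp (∑ i, ∑ j, α i j * ε i j) = ∏ i, ∏ j, Real.exp (α i j * ε i j) := by
  rw [Real.exp_sum]
  exact Finset.prod_congr rfl fun i _ => Real.exp_sum _ _

theorem integrable_exp_noise {n1 n2 : ℕ} (σ : ℝ) (α : Fin n1 → Fin n2 → ℝ) :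
    Integrable (fun ε => Real.exp (∑ i, ∑ j, α i j * ε i j)) (noiseMeasure n1 n2 σ) := by
  simp only [exp_sum_sum_eq_prod, noiseMeasure_eq]
  refine Integrable.fintype_prod (f := fun i (x : Fin n2 → ℝ) => ∏ j, Real.exp (α i j * x j))
    fun i => ?_
  exact Integrable.fintype_prod (f := fun j (x : ℝ) => Real.exp (α i j * x))
    fun j => integrable_exp_mul_gaussianReal _

theorem integral_exp_noise {n1 n2 : ℕ} (σ : ℝ) (α : Fin n1 → Fin n2 → ℝ) :
    ∫ ε, Real.exp (∑ i, ∑ j, α i j * ε i j) ∂noiseMeasure n1 n2 σ =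
      Real.exp (∑ i, ∑ j, σ ^ 2 * α i j ^ 2 / 2) := by
  simp only [exp_sum_sum_eq_prod, noiseMeasure_eq]
  rw [integral_fintype_prod_eq_prod (f := fun i (x : Fin n2 → ℝ) => ∏ j, Real.exp (α i j * x j)),
    Real.exp_sum]
  refine Finset.prod_congr rfl fun i _ => ?_
  rw [integral_fintype_prod_eq_prod (f := fun j (x : ℝ) => Real.exp (α i j * x)), Real.exp_sum]
  refine Finset.prod_congr rfl fun j _ => ?_
  have := congrFun (mgf_id_gaussianReal (μ := 0) (v := (σ ^ 2).toNNReal)) (α i j)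
  rw [mgf, Real.coe_toNNReal _ (sq_nonneg σ)] at this
  simpa using this

/-- The coefficients of the standardized rectangle sum over `[a, b) × [c, d)`. -/
def rectCoeff (n1 n2 : ℕ) (σ : ℝ) (R : ℕ × ℕ × ℕ × ℕ) (i : Fin n1) (j : Fin n2) : ℝ :=
  if (i : ℕ) ∈ Finset.Ico R.1 R.2.1 ∧ (j : ℕ) ∈ Finset.Ico R.2.2.1 R.2.2.2 then
    (σ * √(((R.2.1 - R.1 : ℕ) : ℝ) * ((R.2.2.2 - R.2.2.1 : ℕ) : ℝ)))⁻¹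
  else 0

/-- The corners of all rectangles in the grid. -/
def rects (n1 n2 : ℕ) : Finset (ℕ × ℕ × ℕ × ℕ) :=
  Finset.range (n1 + 1) ×ˢ Finset.range (n1 + 1) ×ˢ Finset.range (n2 + 1) ×ˢ Finset.range (n2 + 1)

theorem sum_fin_ite_mem_Ico (n a b : ℕ) (hb : b ≤ n) (f : ℕ → ℝ) :
    ∑ i : Fin n, (if (i : ℕ) ∈ Finset.Ico a b then f i else 0) = ∑ r ∈ Finset.Ico a b, f r := by
  rw [← Finset.sum_range (fun r => if r ∈ Finset.Ico a b then f r else 0), ← Finset.sum_filter]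
  congr 1
  ext r
  simp only [Finset.mem_filter, Finset.mem_range, Finset.mem_Ico]
  omega

theorem sum_rect_eq {n1 n2 : ℕ} (σ : ℝ) {a b c d : ℕ} (hb : b ≤ n1) (hd : d ≤ n2)
    (F : ℝ → ℕ → ℕ → ℝ) (hF : ∀ r s, F 0 r s = 0) :
    ∑ i : Fin n1, ∑ j : Fin n2, F (rectCoeff n1 n2 σ (a, b, c, d) i j) i j =
      ∑ r ∈ Finset.Ico a b, ∑ s ∈ Finset.Ico c d,
        F (σ * √(((b - a : ℕ) : ℝ) * ((d - c : ℕ) : ℝ)))⁻¹ r s := by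
  rw [← sum_fin_ite_mem_Ico n1 a b hb]
  refine Finset.sum_congr rfl fun i _ => ?_
  split_ifs with hi
  · rw [← sum_fin_ite_mem_Ico n2 c d hd]
    refine Finset.sum_congr rfl fun j _ => ?_
    by_cases hj : (j : ℕ) ∈ Finset.Ico c d
    · rw [rectCoeff, if_pos ⟨hi, hj⟩, if_pos hj]
    · rw [rectCoeff, if_neg fun h => hj h.2, if_neg hj, hF]
  · refine Finset.sum_eq_zero fun j _ => ?_
    rw [rectCoeff, if_neg fun h => hi h.1, hF]

/-- A random bound for the squares of all standardized rectangle sums. -/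
def noiseBound (n1 n2 : ℕ) (σ : ℝ) (ε : Fin n1 → Fin n2 → ℝ) : ℝ :=
  σ ^ 2 * (2 * Real.log (rects n1 n2).card ^ 2 + 4 / (rects n1 n2).card *
    ∑ R ∈ rects n1 n2, (Real.exp (∑ i, ∑ j, rectCoeff n1 n2 σ R i j * ε i j) +
      Real.exp (∑ i, ∑ j, -rectCoeff n1 n2 σ R i j * ε i j)))

theorem noiseBound_nonneg (n1 n2 : ℕ) (σ : ℝ) (ε : Fin n1 → Fin n2 → ℝ) :
    0 ≤ noiseBound n1 n2 σ ε := by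
  unfold noiseBound; positivity

theorem card_rects (n1 n2 : ℕ) : (rects n1 n2).card = (n1 + 1) ^ 2 * (n2 + 1) ^ 2 := by
  simp only [rects, Finset.card_product, Finset.card_range]; ring

theorem sq_le_of_log {x c : ℝ} (hx : 0 ≤ x) (hc : 1 ≤ c) :
    x ^ 2 ≤ 2 * Real.log c ^ 2 + 4 / c * Real.exp x := by
  have hl : 0 ≤ Real.log c := Real.log_nonneg hc
  have hc0 : 0 < c := by linarith
  have he : 4 / c * Real.exp x = 4 * Real.exp (x - Real.log c) := by
    rw [Real.exp_sub, Real.exp_log hc0]; ring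
  rw [he]
  rcases le_total x (Real.log c) with h | h
  · have := Real.exp_pos (x - Real.log c)
    nlinarith
  · have := Real.quadratic_le_exp_of_nonneg (show 0 ≤ x - Real.log c by linarith)
    nlinarith [sq_nonneg (x - 2 * Real.log c)]

theorem rectBound_noiseBound {n1 n2 : ℕ} {σ : ℝ} (hσ : 0 < σ) (ε : Fin n1 → Fin n2 → ℝ) :
    RectBound (extendZero ε) n1 n2 √(noiseBound n1 n2 σ ε) := by
  intro a b c d hab hb hcd hd
  rcases hab.eq_or_lt with rfl | hab'
  · simp
  rcases hcd.eq_or_lt with rfl | hcd'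
  · simp
  set A : ℝ := ((b - a : ℕ) : ℝ) * ((d - c : ℕ) : ℝ) with hA
  have hA0 : 0 < A := by
    have h1 : 0 < b - a := by omega
    have h2 : 0 < d - c := by omega
    rw [hA]; positivity
  set T := ∑ r ∈ Finset.Ico a b, ∑ s ∈ Finset.Ico c d, extendZero ε r s with hT
  set R : ℕ × ℕ × ℕ × ℕ := (a, b, c, d)
  have hR : R ∈ rects n1 n2 := by
    simp only [R, rects, Finset.mem_product, Finset.mem_range]; omega
  have hpos : ∑ i, ∑ j, rectCoeff n1 n2 σ R i j * ε i j = T / (σ * √A) := by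
    have := sum_rect_eq (n1 := n1) (n2 := n2) (a := a) (c := c) σ hb hd
      (fun x r s => x * extendZero ε r s) (by simp)
    simp only [extendZero_val] at this
    rw [this]
    simp only [← Finset.mul_sum]
    rw [← hT, ← hA]; ring
  have hneg : ∑ i, ∑ j, -rectCoeff n1 n2 σ R i j * ε i j = -(T / (σ * √A)) := by
    simp only [neg_mul, Finset.sum_neg_distrib, hpos]
  have hcard : (1 : ℝ) ≤ (rects n1 n2).card := by
    exact_mod_cast Finset.card_pos.2 ⟨R, hR⟩
  have h1 : Real.exp |T / (σ * √A)| ≤ ∑ R ∈ rects n1 n2,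
      (Real.exp (∑ i, ∑ j, rectCoeff n1 n2 σ R i j * ε i j) +
        Real.exp (∑ i, ∑ j, -rectCoeff n1 n2 σ R i j * ε i j)) := by
    refine le_trans ?_ (Finset.single_le_sum (fun R _ => by positivity) hR)
    rw [hpos, hneg]
    rcases abs_cases (T / (σ * √A)) with ⟨h, _⟩ | ⟨h, _⟩ <;> rw [h]
    · exact le_add_of_nonneg_right (Real.exp_nonneg _)
    · exact le_add_of_nonneg_left (Real.exp_nonneg _)
  have h2 : σ ^ 2 * |T / (σ * √A)| ^ 2 ≤ noiseBound n1 n2 σ ε := by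
    unfold noiseBound
    refine mul_le_mul_of_nonneg_left ((sq_le_of_log (abs_nonneg _) hcard).trans ?_) (sq_nonneg σ)
    gcongr
  have h3 : σ ^ 2 * |T / (σ * √A)| ^ 2 = T ^ 2 / A := by
    rw [sq_abs, div_pow, mul_pow, Real.sq_sqrt hA0.le]
    field_simp
  rw [h3, div_le_iff₀ hA0] at h2
  rw [← Real.sqrt_mul (noiseBound_nonneg _ _ _ _)]
  exact Real.abs_le_sqrt h2

theorem sum_sq_rectCoeff_le {n1 n2 : ℕ} {σ : ℝ} (hσ : 0 < σ) {R : ℕ × ℕ × ℕ × ℕ}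
    (hR : R ∈ rects n1 n2) :
    ∑ i, ∑ j, σ ^ 2 * rectCoeff n1 n2 σ R i j ^ 2 / 2 ≤ 1 / 2 := by
  obtain ⟨a, b, c, d⟩ := R
  simp only [rects, Finset.mem_product, Finset.mem_range] at hR
  rw [sum_rect_eq (n1 := n1) (n2 := n2) (a := a) (c := c) σ (by omega) (by omega)
    (fun x _ _ => σ ^ 2 * x ^ 2 / 2) (by simp)]
  simp only [Finset.sum_const, Nat.card_Ico, nsmul_eq_mul]
  rw [inv_pow, mul_pow, Real.sq_sqrt (by positivity)]
  rcases eq_or_ne (((b - a : ℕ) : ℝ)) 0 with h | h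
  · rw [h]; simp
  rcases eq_or_ne (((d - c : ℕ) : ℝ)) 0 with h' | h'
  · rw [h']; simp
  · apply le_of_eq
    field_simp

theorem integrable_noiseBound (n1 n2 : ℕ) (σ : ℝ) :
    Integrable (noiseBound n1 n2 σ) (noiseMeasure n1 n2 σ) := by
  unfold noiseBound
  refine Integrable.const_mul (Integrable.add (integrable_const _) (Integrable.const_mul
    (integrable_finsetSum _ fun R _ => ?_) _)) _
  exact (integrable_exp_noise σ (rectCoeff n1 n2 σ R)).add
    (integrable_exp_noise σ fun i j => -rectCoeff n1 n2 σ R i j)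

theorem integral_noiseBound_le {n1 n2 : ℕ} {σ : ℝ} (hσ : 0 < σ) :
    ∫ ε, noiseBound n1 n2 σ ε ∂noiseMeasure n1 n2 σ ≤
      σ ^ 2 * (2 * Real.log (rects n1 n2).card ^ 2 + 16) := by
  have hint : ∀ R, Integrable (fun ε => Real.exp (∑ i, ∑ j, rectCoeff n1 n2 σ R i j * ε i j) +
      Real.exp (∑ i, ∑ j, -rectCoeff n1 n2 σ R i j * ε i j)) (noiseMeasure n1 n2 σ) := fun R =>
    (integrable_exp_noise σ (rectCoeff n1 n2 σ R)).add
      (integrable_exp_noise σ fun i j => -rectCoeff n1 n2 σ R i j)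
  have hexp : Real.exp (1 / 2) ≤ 2 := by
    have h := Real.exp_one_lt_d9
    have h2 : Real.exp (1 / 2) ^ 2 = Real.exp 1 := by rw [← Real.exp_nat_mul]; norm_num
    nlinarith [Real.exp_pos (1 / 2 : ℝ)]
  have hone : ∀ R ∈ rects n1 n2, ∫ ε, (Real.exp (∑ i, ∑ j, rectCoeff n1 n2 σ R i j * ε i j) +
      Real.exp (∑ i, ∑ j, -rectCoeff n1 n2 σ R i j * ε i j)) ∂noiseMeasure n1 n2 σ ≤ 4 := by
    intro R hR
    rw [integral_add (integrable_exp_noise σ (rectCoeff n1 n2 σ R))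
      (integrable_exp_noise σ fun i j => -rectCoeff n1 n2 σ R i j), integral_exp_noise,
      integral_exp_noise]
    simp only [neg_sq]
    have := Real.exp_le_exp.2 (sum_sq_rectCoeff_le hσ hR)
    linarith
  have hcard : (0 : ℝ) < (rects n1 n2).card := by
    rw [card_rects]; positivity
  unfold noiseBound
  rw [integral_const_mul, integral_add (integrable_const _) (Integrable.const_mul
    (integrable_finsetSum _ fun R _ => hint R) _), integral_const, probReal_univ,
    one_smul, integral_const_mul, integral_finsetSum _ fun R _ => hint R]
  refine mul_le_mul_of_nonneg_left ?_ (sq_nonneg σ)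
  have := Finset.sum_le_sum hone
  rw [Finset.sum_const, nsmul_eq_mul] at this
  gcongr
  calc _ ≤ 4 / ((rects n1 n2).card : ℝ) * ((rects n1 n2).card * 4) := by gcongr
    _ = 16 := by field_simp; norm_num

theorem rate_balance {n V σ x : ℝ} (hn : 0 < n) (hV : 0 < V) (hσ : 0 < σ)
    (hx : x = (n * V ^ 2 / σ ^ 2) ^ ((1 : ℝ) / 3)) :
    (V / x) ^ 2 = (σ ^ 2 * V / n) ^ ((2 : ℝ) / 3) ∧
      x * σ ^ 2 / n = (σ ^ 2 * V / n) ^ ((2 : ℝ) / 3) := by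
  have hx0 : 0 < x := by rw [hx]; positivity
  have hx3 : x ^ 3 = n * V ^ 2 / σ ^ 2 := by
    rw [hx, ← Real.rpow_natCast, ← Real.rpow_mul (by positivity)]
    norm_num
  have hT3 : ((σ ^ 2 * V / n) ^ ((2 : ℝ) / 3)) ^ 3 = (σ ^ 2 * V / n) ^ 2 := by
    rw [← Real.rpow_natCast, ← Real.rpow_mul (by positivity), ← Real.rpow_natCast]
    norm_num
  constructor
  · refine (pow_left_inj₀ (by positivity) (by positivity) (show 3 ≠ 0 by norm_num)).1 ?_
    rw [hT3, show ((V / x) ^ 2) ^ 3 = V ^ 6 / (x ^ 3) ^ 2 by ring, hx3]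
    field_simp
  · refine (pow_left_inj₀ (by positivity) (by positivity) (show 3 ≠ 0 by norm_num)).1 ?_
    rw [hT3, show (x * σ ^ 2 / n) ^ 3 = x ^ 3 * σ ^ 6 / n ^ 3 by ring, hx3]
    field_simp

/-- A monotone vector is within `(β - α) / k` of a monotone vector with at most `k + 1` values. -/
theorem exists_quantization {n k : ℕ} {f : Fin n → ℝ} (hf : Monotone f) {α β : ℝ}
    (hαβ : 0 < β - α) (hα : ∀ i, α ≤ f i) (hβ : ∀ i, f i ≤ β) (hk : (0 : ℝ) < k) :
    ∃ (q : Fin n → ℕ) (c : ℕ → ℝ), Monotone q ∧ (∀ i, q i ≤ k) ∧ Monotone c ∧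
      ∀ i, |c (q i) - f i| ≤ (β - α) / k := by
  refine ⟨fun i => ⌊k * (f i - α) / (β - α)⌋₊, fun b => α + (β - α) * b / k, ?_, ?_, ?_, ?_⟩
  · intro i j hij
    have := hf hij
    apply Nat.floor_mono
    gcongr
  · intro i
    refine Nat.floor_le_of_le ?_
    rw [div_le_iff₀ hαβ]
    have := hβ i
    gcongr
  · intro a b hab
    simp only
    gcongr
  · intro i
    have h0 : 0 ≤ k * (f i - α) / (β - α) :=
      div_nonneg (mul_nonneg hk.le (sub_nonneg.2 (hα i))) hαβ.le
    set y := k * (f i - α) / (β - α) with hy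
    have h1 := Nat.floor_le h0
    have h2 := Nat.lt_floor_add_one y
    have hfi : f i = α + (β - α) * y / k := by rw [hy]; field_simp; ring
    have hdiff : α + (β - α) * (⌊y⌋₊ : ℝ) / k - f i = (β - α) / k * ((⌊y⌋₊ : ℝ) - y) := by
      rw [hfi]; ring
    simp only
    rw [hdiff, abs_mul, abs_of_pos (by positivity)]
    refine mul_le_of_le_one_right (by positivity) ?_
    rw [abs_le]
    constructor <;> linarith

theorem log_two_add_two_le {n1 n2 : ℕ} (h1 : 0 < n1) (h2 : 0 < n2)
    (hL : 1 ≤ Real.log (n1 * n2 : ℝ)) :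
    ((Nat.log 2 n1 + 1 : ℕ) : ℝ) + 1 ≤ 4 * Real.log (n1 * n2 : ℝ) := by
  have hpow : ((2 : ℝ) ^ Nat.log 2 n1) ≤ n1 * n2 := by
    have := (Nat.pow_log_le_self 2 h1.ne').trans (Nat.le_mul_of_pos_right n1 h2)
    exact_mod_cast this
  have h := Real.log_le_log (by positivity) hpow
  rw [Real.log_pow] at h
  have h3 := Real.log_two_gt_d9
  have h4 : (0 : ℝ) ≤ (Nat.log 2 n1 : ℝ) := Nat.cast_nonneg _
  push_cast
  nlinarith

theorem log_card_rects_le {n1 n2 : ℕ} (h1 : 1 < n1) (h2 : 1 < n2) :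
    Real.log (rects n1 n2).card ≤ 4 * Real.log (n1 * n2 : ℝ) := by
  have hle : (rects n1 n2).card ≤ (n1 * n2) ^ 4 := by
    have a1 : n1 + 1 ≤ n1 ^ 2 := by nlinarith
    have a2 : n2 + 1 ≤ n2 ^ 2 := by nlinarith
    rw [card_rects]
    calc (n1 + 1) ^ 2 * (n2 + 1) ^ 2 ≤ (n1 ^ 2) ^ 2 * (n2 ^ 2) ^ 2 := by gcongr
      _ = _ := by ring
  have hpos : (0 : ℝ) < (rects n1 n2).card := by rw [card_rects]; positivity
  have hle' : ((rects n1 n2).card : ℝ) ≤ ((n1 : ℝ) * n2) ^ 4 := by exact_mod_cast hle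
  have := Real.log_le_log hpos hle'
  rw [Real.log_pow] at this
  exact_mod_cast this

/-- **Theorem 4, inequality (vara2) (variable adaptation, worst-case form).** There is
a universal constant `C > 0` such that if the isotonic matrix `θ*` is constant along
each row, i.e. `θ*_{ij} = θ*_i` for a nondecreasing vector `θ* ∈ C_{n1}`, and if
`n D(θ*) ≥ 2σ²`, then `R(θ*, θ̂) ≤ C (log n)⁸ (σ² sqrt(D(θ*)) / n)^{2/3}` with
`n = n1 n2`. -/
theorem isotonic_lse_variable_adaptation_rate :
    ∃ C : ℝ, 0 < C ∧
      ∀ (n1 n2 : ℕ) (h1 : 1 < n1) (h2 : 1 < n2), ∀ σ : ℝ, 0 < σ →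
        ∀ θstar : Fin n1 → Fin n2 → ℝ, Isotonic θstar →
          ∀ θstarVec : Fin n1 → ℝ, Monotone θstarVec →
            (∀ i j, θstar i j = θstarVec i) →
            2 * σ ^ 2 ≤ (n1 * n2 : ℝ) * Dmat (by omega) (by omega) θstar →
            ∀ lse, IsLSE lse →
              risk σ θstar lse ≤
                C * Real.log (n1 * n2) ^ 8 *
                  (σ ^ 2 * Real.sqrt (Dmat (by omega) (by omega) θstar) / (n1 * n2)) ^
                    ((2 : ℝ) / 3) := by
  refine ⟨1179651, by norm_num, ?_⟩
  intro n1 n2 h1 h2 σ hσ θstar hiso θv hθv hrow hD lse hlse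
  have hn4 : (4 : ℝ) ≤ (n1 : ℝ) * n2 := by
    have : 4 ≤ n1 * n2 := Nat.mul_le_mul (show 2 ≤ n1 from h1) (show 2 ≤ n2 from h2)
    exact_mod_cast this
  set i0 : Fin n1 := ⟨0, by omega⟩
  set i1 : Fin n1 := ⟨n1 - 1, by omega⟩
  set V : ℝ := θv i1 - θv i0 with hV
  have hDV : Dmat (by omega) (by omega) θstar = V ^ 2 := by
    rw [Dmat, hrow, hrow]
  rw [hDV] at hD ⊢
  set n : ℝ := (n1 : ℝ) * n2 with hn
  have hn0 : 0 < n := by linarith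
  have hσ2 : 0 < σ ^ 2 := by positivity
  have hV0 : 0 < V := by
    have hle : 0 ≤ V := sub_nonneg.2 (hθv (Fin.mk_le_mk.2 (Nat.zero_le _)))
    refine hle.lt_of_ne fun h => ?_
    rw [← h] at hD
    norm_num at hD
    linarith
  rw [Real.sqrt_sq hV0.le]
  set x : ℝ := (n * V ^ 2 / σ ^ 2) ^ ((1 : ℝ) / 3) with hx
  have hx1 : 1 ≤ x := Real.one_le_rpow (by rw [le_div_iff₀ hσ2]; linarith) (by norm_num)
  obtain ⟨hT1, hT2⟩ := rate_balance hn0 hV0 hσ hx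
  have hx0 : 0 < x := by linarith
  set T := (σ ^ 2 * V / n) ^ ((2 : ℝ) / 3) with hT
  have hT0 : 0 ≤ T := by rw [← hT2]; positivity
  set k : ℕ := ⌈x⌉₊ with hk
  have hxk : x ≤ k := Nat.le_ceil x
  have hkx : (k : ℝ) + 1 ≤ 3 * x := by
    have := Nat.ceil_lt_add_one hx0.le
    linarith
  obtain ⟨q, c, hq, hqk, hc, happ⟩ := exists_quantization hθv hV0
    (fun i => hθv (Fin.mk_le_mk.2 (Nat.zero_le _)) : ∀ i, θv i0 ≤ θv i)
    (fun i => hθv (Fin.mk_le_mk.2 (by omega)) : ∀ i, θv i ≤ θv i1)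
    (show (0 : ℝ) < k by linarith)
  set θ : Fin n1 → Fin n2 → ℝ := fun i _ => c (q i) with hθ
  have happrox : frobSq (θ - θstar) ≤ n * T := by
    calc frobSq (θ - θstar) ≤ ∑ _i : Fin n1, ∑ _j : Fin n2, (V / x) ^ 2 := by
          refine Finset.sum_le_sum fun i _ => Finset.sum_le_sum fun j _ => ?_
          simp only [Pi.sub_apply, hθ, hrow]
          rw [← sq_abs]
          gcongr
          exact (happ i).trans (by gcongr)
      _ = n * T := by
          simp only [Finset.sum_const, Finset.card_univ, Fintype.card_fin, nsmul_eq_mul]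
          rw [← hT1, hn]; ring
  set K := Nat.log 2 n1 + 1 with hK
  have hK1 : n1 ≤ 2 ^ K := (Nat.lt_pow_succ_log_self (by norm_num) n1).le
  set L := Real.log n with hL
  have hL1 : 1 ≤ L := by
    rw [hL, Real.le_log_iff_exp_le hn0]
    have := Real.exp_one_lt_d9
    linarith
  set B : ℝ := 16 * (k + 1) * (K + 1) ^ 4 * (harmonic (n1 * n2) : ℚ) with hB
  have hpoint : ∀ ε, frobSq (lse (θstar + ε) - θstar) ≤
      3 * (n * T) + B * noiseBound n1 n2 σ ε := by
    intro ε
    refine (frobSq_sub_le_of_isLSE hlse (Real.sqrt_nonneg _) (rectBound_noiseBound hσ ε) hK1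
      hq hqk hc (θ := θ) fun i j => rfl).trans ?_
    rw [mul_pow, Real.sq_sqrt (noiseBound_nonneg _ _ _ _)]
    have : 2 * (((k : ℝ) + 1) * (8 * (noiseBound n1 n2 σ ε * (((K : ℝ) + 1) ^ 2) ^ 2) *
        (harmonic (n1 * n2) : ℚ))) = B * noiseBound n1 n2 σ ε := by rw [hB]; ring
    rw [this]
    gcongr
  have hharm : ((harmonic (n1 * n2) : ℚ) : ℝ) ≤ 2 * L := by
    have := harmonic_le_one_add_log (n1 * n2)
    push_cast at this
    linarith
  have hharm0 : (0 : ℝ) ≤ (harmonic (n1 * n2) : ℚ) := by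
    exact_mod_cast (harmonic_mono (Nat.zero_le _) : harmonic 0 ≤ harmonic (n1 * n2))
  have hB0 : 0 ≤ B := by rw [hB]; positivity
  have hKL : (K : ℝ) + 1 ≤ 4 * L := log_two_add_two_le (by omega) (by omega) hL1
  have hBle : B ≤ 16 * (3 * x) * (4 * L) ^ 4 * (2 * L) := by
    rw [hB]; gcongr
  have hEg : ∫ ε, noiseBound n1 n2 σ ε ∂noiseMeasure n1 n2 σ ≤ 48 * σ ^ 2 * L ^ 2 := by
    refine (integral_noiseBound_le hσ).trans ?_
    have hc0 : 0 ≤ Real.log (rects n1 n2).card := Real.log_natCast_nonneg _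
    have hc4 : Real.log (rects n1 n2).card ≤ 4 * L := log_card_rects_le h1 h2
    have : Real.log (rects n1 n2).card ^ 2 ≤ (4 * L) ^ 2 := by gcongr
    have hfac : 2 * Real.log (rects n1 n2).card ^ 2 + 16 ≤ 48 * L ^ 2 := by nlinarith
    calc _ ≤ σ ^ 2 * (48 * L ^ 2) := mul_le_mul_of_nonneg_left hfac hσ2.le
      _ = _ := by ring
  have hint : ∫ ε, frobSq (lse (θstar + ε) - θstar) ∂noiseMeasure n1 n2 σ ≤
      3 * (n * T) + B * ∫ ε, noiseBound n1 n2 σ ε ∂noiseMeasure n1 n2 σ := by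
    refine (integral_mono_of_nonneg (Filter.Eventually.of_forall fun ε => ?_)
      (Integrable.add (integrable_const (3 * (n * T)))
        ((integrable_noiseBound n1 n2 σ).const_mul B))
      (Filter.Eventually.of_forall hpoint)).trans (le_of_eq ?_)
    · exact Finset.sum_nonneg fun i _ => Finset.sum_nonneg fun j _ => sq_nonneg _
    · simp only [Pi.add_apply]
      rw [integral_add (integrable_const _) ((integrable_noiseBound n1 n2 σ).const_mul B),
        integral_const, probReal_univ, one_smul, integral_const_mul]
  rw [risk, div_le_iff₀ hn0]
  have hLpow : L ^ 7 ≤ L ^ 8 := pow_le_pow_right₀ hL1 (by norm_num)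
  have hL8 : 1 ≤ L ^ 8 := one_le_pow₀ hL1
  have hxT : x * σ ^ 2 = n * T := by rw [← hT2]; field_simp
  calc _ ≤ 3 * (n * T) + B * ∫ ε, noiseBound n1 n2 σ ε ∂noiseMeasure n1 n2 σ := hint
    _ ≤ 3 * (n * T) + (16 * (3 * x) * (4 * L) ^ 4 * (2 * L)) * (48 * σ ^ 2 * L ^ 2) := by
      have hEg' := mul_le_mul_of_nonneg_left hEg hB0
      have hBle' := mul_le_mul_of_nonneg_right hBle (show 0 ≤ 48 * σ ^ 2 * L ^ 2 by positivity)
      linarith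
    _ = 3 * (n * T) + 1179648 * L ^ 7 * (x * σ ^ 2) := by ring
    _ = 3 * (n * T) * 1 + 1179648 * (n * T) * L ^ 7 := by rw [hxT]; ring
    _ ≤ 3 * (n * T) * L ^ 8 + 1179648 * (n * T) * L ^ 8 := by gcongr
    _ = _ := by ring
end
end

section
/- There exists a universal constant C > 0 such that for every ε > 0 and all integers n1, n2 > 1, the ε-covering number of the Frobenius-norm unit ball of isotonic matrices satisfies log N(ε, B(0,1)) ≤ C · (log n1)² (log n2)² / ε² · [ log( 4 sqrt(log n1 · log n2) / ε ) ]². -/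
open MeasureTheory ProbabilityTheory

noncomputable section

/-- The `ε`-covering number of `F ⊆ ℝ^{n1×n2}` in the Frobenius metric: the smallest
cardinality of a finite set `S` such that every point of `F` is within Frobenius
distance `ε` of some point of `S`. -/
def coverNum {n1 n2 : ℕ} (ε : ℝ) (F : Set (Fin n1 → Fin n2 → ℝ)) : ℕ :=
  sInf {k | ∃ S : Finset (Fin n1 → Fin n2 → ℝ), S.card = k ∧
    ∀ θ ∈ F, ∃ s ∈ S, frobSq (θ - s) ≤ ε ^ 2}

/-- The multiple of `2 ^ (a - s)` just below `x`: the lower end of the cell of `x` in the partition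
of `[0, 2 ^ a)` into `2 ^ s` intervals of equal length (singletons if `a ≤ s`). -/
def dyadicCorner (a s x : ℕ) : ℕ := x / 2 ^ (a - s) * 2 ^ (a - s)

lemma dyadicCorner_le (a s x : ℕ) : dyadicCorner a s x ≤ x := Nat.div_mul_le_self _ _

lemma dyadicCorner_mono (a s : ℕ) : Monotone (dyadicCorner a s) := fun _ _ h =>
  Nat.mul_le_mul_right _ (Nat.div_le_div_right h)

lemma dyadicCorner_succ_dvd (a s x : ℕ) : 2 ^ (a - (s + 1)) ∣ dyadicCorner a s x :=
  Dvd.dvd.mul_left (pow_dvd_pow 2 (by omega)) _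

lemma dyadicCorner_le_succ (a s x : ℕ) : dyadicCorner a s x ≤ dyadicCorner a (s + 1) x := by
  have h := dyadicCorner_mono a (s + 1) (dyadicCorner_le a s x)
  rwa [dyadicCorner, Nat.div_mul_cancel (dyadicCorner_succ_dvd a s x)] at h

lemma div_dyadic_lt {a s x : ℕ} (hx : x < 2 ^ a) : x / 2 ^ (a - s) < 2 ^ s := by
  rw [Nat.div_lt_iff_lt_mul (by positivity), ← pow_add]
  exact hx.trans_le (Nat.pow_le_pow_right (by norm_num) (by omega))

lemma sum_sub_floor_mul_le {h : ℕ → ℝ} (hh : Antitone h) (h0 : ∀ x, 0 ≤ h x) (h1 : ∀ x, h x ≤ 1)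
    {w N : ℕ} (hw : 0 < w) (hN : w ≤ N) :
    ∑ x ∈ Finset.range N, (h (x / w * w) - h x) ≤ w := by
  obtain ⟨M, rfl⟩ := Nat.exists_eq_add_of_le hN
  rw [Finset.sum_sub_distrib, Finset.sum_range_add]
  have e1 : ∑ x ∈ Finset.range w, h (x / w * w) ≤ w := by
    calc _ ≤ ∑ x ∈ Finset.range w, (1 : ℝ) := Finset.sum_le_sum fun x _ => h1 _
      _ = w := by simp
  have e2 : ∑ x ∈ Finset.range M, h ((w + x) / w * w) ≤ ∑ x ∈ Finset.range M, h x := by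
    refine Finset.sum_le_sum fun x _ => hh ?_
    have := Nat.lt_div_mul_add (a := w + x) hw
    omega
  have e3 : ∑ x ∈ Finset.range M, h x ≤ ∑ x ∈ Finset.range (w + M), h x :=
    Finset.sum_le_sum_of_subset_of_nonneg (Finset.range_mono (by omega)) fun x _ _ => h0 x
  linarith

lemma sum_sub_dyadicCorner_le {h : ℕ → ℝ} (hh : Antitone h) (h0 : ∀ x, 0 ≤ h x)
    (h1 : ∀ x, h x ≤ 1) (a s : ℕ) :
    ∑ x ∈ Finset.range (2 ^ a), (h (dyadicCorner a s x) - h x) ≤ 2 ^ a / 2 ^ s := by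
  rcases le_total s a with hs | hs
  · refine (sum_sub_floor_mul_le hh h0 h1 (w := 2 ^ (a - s)) (by positivity)
      (Nat.pow_le_pow_right (by norm_num) (by omega))).trans (le_of_eq ?_)
    push_cast
    rw [pow_sub₀ _ (by norm_num) hs, div_eq_mul_inv]
  · simp only [dyadicCorner, Nat.sub_eq_zero_of_le hs, pow_zero, Nat.div_one, mul_one, sub_self,
      Finset.sum_const_zero]
    positivity

/-- The `2 ^ a × 2 ^ b` block of indices. -/
def dyadicBlock (a b : ℕ) : Finset (ℕ × ℕ) := Finset.range (2 ^ a) ×ˢ Finset.range (2 ^ b)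

/-- The smallest corner of the level `s` cell containing `z` in the block `dyadicBlock a b`. -/
def blockCorner (a b s : ℕ) (z : ℕ × ℕ) : ℕ × ℕ := (dyadicCorner a s z.1, dyadicCorner b s z.2)

lemma blockCorner_le (a b s : ℕ) (z : ℕ × ℕ) : blockCorner a b s z ≤ z :=
  ⟨dyadicCorner_le _ _ _, dyadicCorner_le _ _ _⟩

lemma blockCorner_le_succ (a b s : ℕ) (z : ℕ × ℕ) :
    blockCorner a b s z ≤ blockCorner a b (s + 1) z :=
  ⟨dyadicCorner_le_succ _ _ _, dyadicCorner_le_succ _ _ _⟩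

lemma card_dyadicBlock (a b : ℕ) : ((dyadicBlock a b).card : ℝ) = 2 ^ a * 2 ^ b := by
  simp [dyadicBlock]

lemma sum_sub_blockCorner_le {f : ℕ × ℕ → ℝ} (hf : Antitone f) (f0 : ∀ z, 0 ≤ f z)
    (f1 : ∀ z, f z ≤ 1) (a b s : ℕ) :
    ∑ z ∈ dyadicBlock a b, (f (blockCorner a b s z) - f z) ≤ 2 * (2 ^ a * 2 ^ b) / 2 ^ s := by
  have e1 : ∑ x ∈ Finset.range (2 ^ a), ∑ y ∈ Finset.range (2 ^ b),
      (f (dyadicCorner a s x, dyadicCorner b s y) - f (dyadicCorner a s x, y)) ≤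
      2 ^ a * (2 ^ b / 2 ^ s) := by
    calc _ ≤ ∑ x ∈ Finset.range (2 ^ a), (2 ^ b / 2 ^ s : ℝ) :=
          Finset.sum_le_sum fun x _ => sum_sub_dyadicCorner_le
            (h := fun y => f (dyadicCorner a s x, y)) (fun _ _ h => hf ⟨le_rfl, h⟩)
            (fun _ => f0 _) (fun _ => f1 _) b s
      _ = _ := by simp
  have e2 : ∑ y ∈ Finset.range (2 ^ b), ∑ x ∈ Finset.range (2 ^ a),
      (f (dyadicCorner a s x, y) - f (x, y)) ≤ 2 ^ b * (2 ^ a / 2 ^ s) := by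
    calc _ ≤ ∑ x ∈ Finset.range (2 ^ b), (2 ^ a / 2 ^ s : ℝ) :=
          Finset.sum_le_sum fun y _ => sum_sub_dyadicCorner_le
            (h := fun x => f (x, y)) (fun _ _ h => hf ⟨h, le_rfl⟩)
            (fun _ => f0 _) (fun _ => f1 _) a s
      _ = _ := by simp
  rw [Finset.sum_comm] at e2
  calc _ = _ := Finset.sum_product _ _ _
    _ = (∑ x ∈ Finset.range (2 ^ a), ∑ y ∈ Finset.range (2 ^ b),
      (f (dyadicCorner a s x, dyadicCorner b s y) - f (dyadicCorner a s x, y))) +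
      ∑ x ∈ Finset.range (2 ^ a), ∑ y ∈ Finset.range (2 ^ b),
      (f (dyadicCorner a s x, y) - f (x, y)) := by
        simp only [← Finset.sum_add_distrib]
        simp [blockCorner]
    _ ≤ 2 ^ a * (2 ^ b / 2 ^ s) + 2 ^ b * (2 ^ a / 2 ^ s) := add_le_add e1 e2
    _ = _ := by ring

lemma sum_blockCorner_sub_succ_le {f : ℕ × ℕ → ℝ} (hf : Antitone f) (f0 : ∀ z, 0 ≤ f z)
    (f1 : ∀ z, f z ≤ 1) (a b s : ℕ) :
    ∑ z ∈ dyadicBlock a b, |f (blockCorner a b (s + 1) z) - f (blockCorner a b s z)| ≤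
      4 * (2 ^ a * 2 ^ b) / 2 ^ (s + 1) := by
  calc _ ≤ ∑ z ∈ dyadicBlock a b, (f (blockCorner a b s z) - f z) := by
        refine Finset.sum_le_sum fun z _ => ?_
        have h1 := hf (blockCorner_le_succ a b s z)
        have h2 := hf (blockCorner_le a b (s + 1) z)
        rw [abs_sub_comm, abs_of_nonneg (by linarith)]
        linarith
    _ ≤ _ := sum_sub_blockCorner_le hf f0 f1 a b s
    _ = _ := by rw [pow_succ]; field_simp; ring

lemma abs_sum_le_of_abs_le_geom {e : ℕ → ℝ} {τ : ℝ} (n : ℕ)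
    (he : ∀ s < n, |e s| ≤ τ * 2 ^ s) (hτ : 0 ≤ τ) :
    |∑ s ∈ Finset.range n, e s| ≤ τ * 2 ^ n := by
  induction n with
  | zero => simpa using hτ
  | succ n ih =>
    rw [Finset.sum_range_succ]
    refine (abs_add_le _ _).trans ?_
    have := ih fun s hs => he s (by omega)
    have := he n (by omega)
    rw [pow_succ]
    linarith

lemma sq_sum_le_of_abs_le_geom {e : ℕ → ℝ} {τ : ℝ} (n : ℕ)
    (he : ∀ s < n, |e s| ≤ τ * 2 ^ s) (hτ : 0 ≤ τ) :
    (∑ s ∈ Finset.range n, e s) ^ 2 ≤ 4 * τ * ∑ s ∈ Finset.range n, 2 ^ s * |e s| := by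
  induction n with
  | zero => simp
  | succ n ih =>
    rw [Finset.sum_range_succ, Finset.sum_range_succ]
    have h1 := ih fun s hs => he s (by omega)
    have h2 := he n (by omega)
    have h3 := abs_sum_le_of_abs_le_geom n (fun s hs => he s (by omega)) hτ
    set P := ∑ s ∈ Finset.range n, e s
    have h4 : P * e n ≤ τ * 2 ^ n * |e n| := by
      calc P * e n ≤ |P| * |e n| := by rw [← abs_mul]; exact le_abs_self _
        _ ≤ _ := by gcongr
    have h5 : e n ^ 2 ≤ τ * 2 ^ n * |e n| := by
      rw [← sq_abs, sq]
      gcongr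
    have h6 : 0 ≤ τ * 2 ^ n * |e n| := by positivity
    nlinarith

/-- Rounding down to a multiple of `t`. -/
def roundDown (t x : ℝ) : ℝ := t * ⌊x / t⌋₊

lemma roundDown_mono {t : ℝ} (ht : 0 < t) : Monotone (roundDown t) := fun x y h => by
  unfold roundDown
  gcongr

lemma roundDown_nonneg {t : ℝ} (ht : 0 < t) (x : ℝ) : 0 ≤ roundDown t x := by
  unfold roundDown; positivity

lemma roundDown_le {t x : ℝ} (ht : 0 < t) (hx : 0 ≤ x) : roundDown t x ≤ x := by
  have := Nat.floor_le (a := x / t) (by positivity)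
  calc _ ≤ t * (x / t) := by unfold roundDown; gcongr
    _ = x := by field_simp

lemma le_roundDown_add {t : ℝ} (ht : 0 < t) (x : ℝ) : x ≤ roundDown t x + t := by
  have := (Nat.lt_floor_add_one (x / t)).le
  calc x = t * (x / t) := by field_simp
    _ ≤ t * (⌊x / t⌋₊ + 1) := by gcongr
    _ = _ := by unfold roundDown; ring

/-- The level `s` increment of the multiscale approximation of `f`, rounded to multiples of
`τ * 2 ^ s`. -/
def levelIncrement (a b : ℕ) (τ : ℝ) (f : ℕ × ℕ → ℝ) (s : ℕ) (z : ℕ × ℕ) : ℝ :=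
  roundDown (τ * 2 ^ s) (f (blockCorner a b s z)) -
    if s = 0 then 0 else roundDown (τ * 2 ^ s) (f (blockCorner a b (s - 1) z))

lemma sum_sq_sub_levelIncrement_le {f : ℕ × ℕ → ℝ} (hf : Antitone f) (f0 : ∀ z, 0 ≤ f z)
    (f1 : ∀ z, f z ≤ 1) (a b S : ℕ) {τ : ℝ} (hτ : 0 < τ) :
    ∑ z ∈ dyadicBlock a b,
        (f z - ∑ s ∈ Finset.range (S + 1), levelIncrement a b τ f s z) ^ 2 ≤
      2 ^ a * 2 ^ b * (4 / 2 ^ S + 64 * τ * (S + 1)) := by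
  have ht : ∀ s : ℕ, 0 < τ * 2 ^ s := fun s => by positivity
  set e : ℕ × ℕ → ℕ → ℝ := fun z s => (f (blockCorner a b s z) -
    if s = 0 then 0 else f (blockCorner a b (s - 1) z)) - levelIncrement a b τ f s z with he
  have hsum : ∀ z, ∑ s ∈ Finset.range (S + 1), e z s = f (blockCorner a b S z) -
      ∑ s ∈ Finset.range (S + 1), levelIncrement a b τ f s z := fun z => by
    simp only [he, Finset.sum_sub_distrib]
    congr 1
    rw [← Finset.sum_sub_distrib, Finset.sum_range_succ']
    simp [Finset.sum_range_sub (fun s => f (blockCorner a b s z))]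
  have hsmall : ∀ z s, |e z s| ≤ τ * 2 ^ s := fun z s => by
    have A := fun z => roundDown_le (ht s) (f0 z)
    have B := fun z => le_roundDown_add (ht s) (f z)
    have A1 := A (blockCorner a b s z)
    have B1 := B (blockCorner a b s z)
    have A2 := A (blockCorner a b (s - 1) z)
    have B2 := B (blockCorner a b (s - 1) z)
    have := ht s
    simp only [he, levelIncrement]
    rw [abs_le]
    split_ifs <;> constructor <;> linarith
  have hl1 : ∀ s, ∑ z ∈ dyadicBlock a b, 2 ^ s * |e z s| ≤ 8 * (2 ^ a * 2 ^ b) := fun s => by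
    rcases s with _ | s
    · calc _ ≤ ∑ z ∈ dyadicBlock a b, (1 : ℝ) := by
            refine Finset.sum_le_sum fun z _ => ?_
            have A := roundDown_le (ht 0) (f0 (blockCorner a b 0 z))
            have B := roundDown_nonneg (ht 0) (f (blockCorner a b 0 z))
            have := f1 (blockCorner a b 0 z)
            simp only [he, levelIncrement, if_true, sub_zero]
            rw [abs_of_nonneg (by linarith)]
            simp only [pow_zero, one_mul, mul_one] at *
            linarith
        _ = 1 * (2 ^ a * 2 ^ b) := by simp [card_dyadicBlock]
        _ ≤ _ := by gcongr; norm_num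
    · have q0 := fun z => roundDown_nonneg (ht (s + 1)) (f z)
      have q1 := fun z => (roundDown_le (ht (s + 1)) (f0 z)).trans (f1 z)
      have hq : Antitone fun z => roundDown (τ * 2 ^ (s + 1)) (f z) :=
        (roundDown_mono (ht (s + 1))).comp_antitone hf
      have E1 := sum_blockCorner_sub_succ_le hf f0 f1 a b s
      have E2 := sum_blockCorner_sub_succ_le hq q0 q1 a b s
      rw [← Finset.mul_sum]
      calc _ ≤ 2 ^ (s + 1) * (4 * (2 ^ a * 2 ^ b) / 2 ^ (s + 1) +
            4 * (2 ^ a * 2 ^ b) / 2 ^ (s + 1) : ℝ) := by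
            gcongr
            refine le_trans ?_ (add_le_add E1 E2)
            rw [← Finset.sum_add_distrib]
            refine Finset.sum_le_sum fun z _ => ?_
            simp only [he, levelIncrement, Nat.succ_ne_zero, if_false, Nat.add_sub_cancel]
            exact abs_sub _ _
        _ = _ := by field_simp; ring
  have hpt : ∀ z, (f z - ∑ s ∈ Finset.range (S + 1), levelIncrement a b τ f s z) ^ 2 ≤
      2 * (f (blockCorner a b S z) - f z) +
        8 * τ * ∑ s ∈ Finset.range (S + 1), 2 ^ s * |e z s| := fun z => by
    have h1 := sq_sum_le_of_abs_le_geom (S + 1) (fun s _ => hsmall z s) hτ.le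
    rw [hsum] at h1
    have h2 := hf (blockCorner_le a b S z)
    have h3 := f1 (blockCorner a b S z)
    have h4 := f0 z
    have h5 : (f (blockCorner a b S z) - f z) ^ 2 ≤ f (blockCorner a b S z) - f z := by nlinarith
    have h6 := sq_nonneg ((f (blockCorner a b S z) - f z) + (f (blockCorner a b S z) -
      ∑ s ∈ Finset.range (S + 1), levelIncrement a b τ f s z))
    nlinarith
  calc _ ≤ ∑ z ∈ dyadicBlock a b, (2 * (f (blockCorner a b S z) - f z) +
        8 * τ * ∑ s ∈ Finset.range (S + 1), 2 ^ s * |e z s|) :=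
        Finset.sum_le_sum fun z _ => hpt z
    _ = 2 * ∑ z ∈ dyadicBlock a b, (f (blockCorner a b S z) - f z) +
        8 * τ * ∑ s ∈ Finset.range (S + 1), ∑ z ∈ dyadicBlock a b, 2 ^ s * |e z s| := by
        rw [Finset.sum_add_distrib, ← Finset.mul_sum, ← Finset.mul_sum, Finset.sum_comm]
    _ ≤ 2 * (2 * (2 ^ a * 2 ^ b) / 2 ^ S) +
        8 * τ * ∑ s ∈ Finset.range (S + 1), (8 * (2 ^ a * 2 ^ b) : ℝ) := by
        gcongr with s
        · exact sum_sub_blockCorner_le hf f0 f1 a b S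
        · exact hl1 s
    _ = _ := by
        simp only [Finset.sum_const, Finset.card_range, nsmul_eq_mul]
        push_cast
        ring

lemma exists_finset_card_le_of_code {X T : Type*} [Fintype T] (code : X → T) (P : X → Prop) :
    ∃ H : Finset X, H.card ≤ Fintype.card T ∧ ∀ x, P x → ∃ h ∈ H, P h ∧ code h = code x := by
  classical
  obtain ⟨u, hu, hinj, himg⟩ :=
    (Set.surjOn_image code {x | P x}).exists_subset_injOn_image_eq
  have hfin : u.Finite := Set.Finite.of_finite_image (Set.toFinite _) hinj
  refine ⟨hfin.toFinset, ?_, fun x hx => ?_⟩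
  · exact Finset.card_le_card_of_injOn code (fun _ _ => Finset.mem_coe.2 (Finset.mem_univ _))
      (by simpa using hinj)
  · obtain ⟨h, hh, e⟩ : code x ∈ code '' u := himg ▸ Set.mem_image_of_mem code hx
    exact ⟨h, by simpa using hh, hu hh, e⟩

lemma lt_count_iff_of_downward_closed {p : ℕ → Prop} [DecidablePred p]
    (hp : ∀ ⦃y z⦄, y ≤ z → p z → p y) {y n : ℕ} (hy : y < n) : y < Nat.count p n ↔ p y := by
  constructor
  · intro h
    by_contra hpy
    obtain ⟨m, rfl⟩ := Nat.exists_eq_add_of_le hy.le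
    rw [Nat.count_add, Nat.count_iff_forall_not.2 fun k _ hk => hpy (hp (Nat.le_add_right y k) hk)]
      at h
    exact absurd h (not_lt.2 (Nat.count_le _))
  · intro h
    have h1 : Nat.count p (y + 1) = y + 1 :=
      Nat.count_iff_forall.2 fun z hz => hp (Nat.lt_succ_iff.1 hz) h
    have h2 := Nat.count_monotone p (Nat.succ_le_of_lt hy)
    rw [Nat.succ_eq_add_one, h1] at h2
    exact h2

lemma exists_finset_antitone_grid (n k : ℕ) :
    ∃ H : Finset (ℕ × ℕ → ℕ), H.card ≤ (2 ^ (2 * n)) ^ k ∧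
      ∀ Q : ℕ × ℕ → ℕ, Antitone Q → (∀ z, Q z ≤ k) →
        ∃ h ∈ H, ∀ x < n, ∀ y < n, h (x, y) = Q (x, y) := by
  classical
  set height : (ℕ × ℕ → ℕ) → ℕ → ℕ → ℕ := fun Q j x => Nat.count (fun y => j < Q (x, y)) n
    with height_def
  set path : (ℕ × ℕ → ℕ) → ℕ → Fin n → ℕ := fun Q j x => x + (n - height Q j x) with path_def
  have path_lt : ∀ Q j x, path Q j x < 2 * n := fun Q j x => by
    have := x.2
    simp only [path_def]
    omega
  have path_mono : ∀ Q, Antitone Q → ∀ j, StrictMono (path Q j) := fun Q hQ j x x' hx => by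
    have : height Q j x' ≤ height Q j x :=
      Nat.count_mono_left fun y _ hy => lt_of_lt_of_le hy (hQ ⟨hx.le, le_rfl⟩)
    have hx' : (x : ℕ) < x' := hx
    simp only [path_def]
    omega
  set code : (ℕ × ℕ → ℕ) → Fin k → Set (Fin (2 * n)) :=
    fun Q j => {p | (p : ℕ) ∈ Set.range (path Q j)} with code_def
  obtain ⟨H, hcard, hH⟩ := exists_finset_card_le_of_code code
    fun Q => Antitone Q ∧ ∀ z, Q z ≤ k
  refine ⟨H, hcard.trans (le_of_eq (by simp)), fun Q hQ hQk => ?_⟩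
  obtain ⟨h, hhH, ⟨hanti, hk⟩, hcode⟩ := hH Q ⟨hQ, hQk⟩
  refine ⟨h, hhH, fun x hx y hy => ?_⟩
  have hiff : ∀ j < k, j < h (x, y) ↔ j < Q (x, y) := fun j hj => by
    have hrange : Set.range (path h j) = Set.range (path Q j) := by
      ext p
      by_cases hp : p < 2 * n
      · simpa [code_def] using Set.ext_iff.1 (congrFun hcode ⟨j, hj⟩) ⟨p, hp⟩
      · constructor <;> rintro ⟨x, rfl⟩ <;> exact absurd (path_lt _ _ _) hp
    have hpath := congrFun (((path_mono h hanti j).range_inj (path_mono Q hQ j)).1 hrange) ⟨x, hx⟩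
    have h1 : height h j x ≤ n := Nat.count_le _
    have h2 : height Q j x ≤ n := Nat.count_le _
    have hheight : height h j x = height Q j x := by
      simp only [path_def] at hpath
      omega
    have key : ∀ R : ℕ × ℕ → ℕ, Antitone R → (y < height R j x ↔ j < R (x, y)) := fun R hR =>
      lt_count_iff_of_downward_closed (p := fun y => j < R (x, y))
        (fun _ _ hyz hz => hz.trans_le (hR ⟨le_rfl, hyz⟩)) hy
    rw [← key h hanti, ← key Q hQ, hheight]
  have := hk (x, y)
  have := hQk (x, y)
  refine le_antisymm (not_lt.1 fun hlt => ?_) (not_lt.1 fun hlt => ?_)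
  · exact absurd ((hiff _ (by omega)).1 hlt) (lt_irrefl _)
  · exact absurd ((hiff _ (by omega)).2 hlt) (lt_irrefl _)

lemma exists_finset_block_net (a b S : ℕ) {τ : ℝ} (hτ : 0 < τ) :
    ∃ G : Finset (ℕ × ℕ → ℝ), (G.card : ℝ) ≤ Real.exp ((S + 1) * (2 / τ)) ∧
      ∀ f : ℕ × ℕ → ℝ, Antitone f → (∀ z, 0 ≤ f z) → (∀ z, f z ≤ 1) →
        ∃ g ∈ G, ∑ z ∈ dyadicBlock a b, (f z - g z) ^ 2 ≤
          2 ^ a * 2 ^ b * (4 / 2 ^ S + 64 * τ * (S + 1)) := by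
  classical
  have ht : ∀ s : ℕ, 0 < τ * 2 ^ s := fun s => by positivity
  choose H hcard hH using fun s : ℕ =>
    exists_finset_antitone_grid (2 ^ s) ⌊1 / (τ * 2 ^ s)⌋₊
  have hcard' : ∀ s, ((H s).card : ℝ) ≤ Real.exp (2 / τ) := fun s => by
    calc ((H s).card : ℝ) ≤ ((2 ^ (2 * 2 ^ s)) ^ ⌊1 / (τ * 2 ^ s)⌋₊ : ℕ) := by
          exact_mod_cast hcard s
      _ = 2 ^ (2 * 2 ^ s * ⌊1 / (τ * 2 ^ s)⌋₊) := by push_cast; rw [← pow_mul]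
      _ ≤ Real.exp 1 ^ (2 * 2 ^ s * ⌊1 / (τ * 2 ^ s)⌋₊) := by
          gcongr
          linarith [Real.add_one_le_exp 1]
      _ = Real.exp (2 * 2 ^ s * ⌊1 / (τ * 2 ^ s)⌋₊) := by
          rw [← Real.exp_nat_mul]; push_cast; ring_nf
      _ ≤ Real.exp (2 * 2 ^ s * (1 / (τ * 2 ^ s))) := by
          gcongr
          exact Nat.floor_le (by positivity)
      _ = _ := by congr 1; field_simp
  set cell : ℕ → ℕ × ℕ → ℕ × ℕ := fun s z => (z.1 / 2 ^ (a - s), z.2 / 2 ^ (b - s)) with cell_def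
  set decode : (Fin (S + 1) → ℕ × ℕ → ℕ) → ℕ × ℕ → ℝ := fun h z =>
    ∑ s : Fin (S + 1), ((τ * 2 ^ (s : ℕ)) * h s (cell s z) -
      if (s : ℕ) = 0 then 0 else
        (τ * 2 ^ (s : ℕ)) * h s (cell s (blockCorner a b (s - 1) z))) with decode_def
  refine ⟨(Fintype.piFinset fun s : Fin (S + 1) => H s).image decode, ?_, fun f hf f0 f1 => ?_⟩
  · calc _ ≤ ((Fintype.piFinset fun s : Fin (S + 1) => H s).card : ℝ) := by
          exact_mod_cast Finset.card_image_le
      _ = ∏ s : Fin (S + 1), ((H s).card : ℝ) := by rw [Fintype.card_piFinset]; push_cast; rfl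
      _ ≤ ∏ s : Fin (S + 1), Real.exp (2 / τ) :=
          Finset.prod_le_prod (fun _ _ => by positivity) fun s _ => hcard' s
      _ = _ := by
          rw [Finset.prod_const, ← Real.exp_nat_mul]
          simp
  · set Q : ℕ → ℕ × ℕ → ℕ := fun s u =>
      ⌊f (u.1 * 2 ^ (a - s), u.2 * 2 ^ (b - s)) / (τ * 2 ^ s)⌋₊ with Q_def
    have hQ : ∀ s, Antitone (Q s) := fun s u v huv => by
      have : f (v.1 * 2 ^ (a - s), v.2 * 2 ^ (b - s)) ≤ f (u.1 * 2 ^ (a - s), u.2 * 2 ^ (b - s)) :=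
        hf ⟨Nat.mul_le_mul_right _ huv.1, Nat.mul_le_mul_right _ huv.2⟩
      simp only [Q_def]
      gcongr
    have hQk : ∀ s u, Q s u ≤ ⌊1 / (τ * 2 ^ s)⌋₊ := fun s u => by
      simp only [Q_def]
      gcongr
      exact f1 _
    choose h hhH hh using fun s => hH s (Q s) (hQ s) (hQk s)
    refine ⟨decode fun s => h s,
      Finset.mem_image_of_mem _ (Fintype.mem_piFinset.2 fun s => hhH s), ?_⟩
    refine le_trans (le_of_eq (Finset.sum_congr rfl fun z hz => ?_))
      (sum_sq_sub_levelIncrement_le hf f0 f1 a b S hτ)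
    obtain ⟨hz1, hz2⟩ : z.1 < 2 ^ a ∧ z.2 < 2 ^ b := by simpa [dyadicBlock] using hz
    have hcell : ∀ s : ℕ, ∀ u ≤ z, h s (cell s u) = Q s (cell s u) := fun s u hu =>
      hh s _ (div_dyadic_lt (hu.1.trans_lt hz1)) _ (div_dyadic_lt (hu.2.trans_lt hz2))
    rw [Finset.sum_range (fun s => levelIncrement a b τ f s z)]
    simp only [decode_def]
    congr 2
    refine Finset.sum_congr rfl fun s _ => ?_
    rw [hcell s z le_rfl, hcell s _ (blockCorner_le _ _ _ _), levelIncrement]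
    congr 1
    split_ifs with hs
    · rfl
    · obtain ⟨r, hr⟩ := Nat.exists_eq_succ_of_ne_zero hs
      simp only [hr, Nat.succ_eq_add_one, Nat.add_sub_cancel, Q_def, cell_def, roundDown,
        blockCorner, Nat.div_mul_cancel (dyadicCorner_succ_dvd _ _ _)]

lemma sum_fin_succ_le_sum_dyadic {φ : ℕ → ℝ} (hφ : ∀ p, 0 ≤ φ p) {n A : ℕ} (hn : n < 2 ^ A) :
    ∑ i : Fin n, φ (i + 1) ≤ ∑ a ∈ Finset.range A, ∑ x ∈ Finset.range (2 ^ a), φ (2 ^ a + x) := by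
  have key : ∑ a ∈ Finset.range A, ∑ x ∈ Finset.range (2 ^ a), φ (2 ^ a + x) =
      ∑ p ∈ Finset.Ico 1 (2 ^ A), φ p := by
    clear hn
    induction A with
    | zero => simp
    | succ A ih =>
      rw [Finset.sum_range_succ, ih, ← Finset.sum_Ico_consecutive φ (Nat.one_le_two_pow (n := A))
        (Nat.pow_le_pow_right (by norm_num) (Nat.le_succ A)), Finset.sum_Ico_eq_sum_range φ (2 ^ A)]
      congr 3
      rw [pow_succ]
      omega
  rw [key, Fin.sum_univ_eq_sum_range (fun i => φ (i + 1)) n, Finset.range_eq_Ico,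
    Finset.sum_Ico_add' φ 0 n 1]
  exact Finset.sum_le_sum_of_subset_of_nonneg (Finset.Ico_subset_Ico (by omega) (by omega))
    fun p _ _ => hφ p

/-- The positive part of a matrix with both index orders reversed, extended by zero to `ℕ × ℕ`. -/
def reversedPosPart {n1 n2 : ℕ} (θ : Fin n1 → Fin n2 → ℝ) (z : ℕ × ℕ) : ℝ :=
  if h : z.1 < n1 ∧ z.2 < n2 then max (θ (Fin.rev ⟨z.1, h.1⟩) (Fin.rev ⟨z.2, h.2⟩)) 0 else 0

lemma reversedPosPart_nonneg {n1 n2 : ℕ} (θ : Fin n1 → Fin n2 → ℝ) (z : ℕ × ℕ) :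
    0 ≤ reversedPosPart θ z := by
  unfold reversedPosPart
  split_ifs <;> simp

lemma Isotonic.antitone_reversedPosPart {n1 n2 : ℕ} {θ : Fin n1 → Fin n2 → ℝ} (hθ : Isotonic θ) :
    Antitone (reversedPosPart θ) := fun u v huv => by
  by_cases hv : v.1 < n1 ∧ v.2 < n2
  · have hu : u.1 < n1 ∧ u.2 < n2 := ⟨huv.1.trans_lt hv.1, huv.2.trans_lt hv.2⟩
    rw [reversedPosPart, reversedPosPart, dif_pos hv, dif_pos hu]
    exact max_le_max_right _ (hθ (Fin.rev_le_rev.2 huv.1) (Fin.rev_le_rev.2 huv.2))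
  · rw [reversedPosPart, dif_neg hv]
    exact reversedPosPart_nonneg θ u

lemma Isotonic.mul_sq_le_frobSq {n1 n2 : ℕ} {θ : Fin n1 → Fin n2 → ℝ} (hθ : Isotonic θ)
    (i : Fin n1) (j : Fin n2) :
    ((Fin.rev i : ℕ) + 1) * ((Fin.rev j : ℕ) + 1) * max (θ i j) 0 ^ 2 ≤ frobSq θ := by
  have c1 : ((Finset.Ici i).card : ℝ) = (Fin.rev i : ℕ) + 1 := by
    rw [Fin.card_Ici, Fin.val_rev]
    have := i.2
    norm_cast
    omega
  have c2 : ((Finset.Ici j).card : ℝ) = (Fin.rev j : ℕ) + 1 := by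
    rw [Fin.card_Ici, Fin.val_rev]
    have := j.2
    norm_cast
    omega
  calc _ = ∑ k ∈ Finset.Ici i, ∑ l ∈ Finset.Ici j, max (θ i j) 0 ^ 2 := by
        simp only [Finset.sum_const, nsmul_eq_mul, c1, c2]; ring
    _ ≤ ∑ k ∈ Finset.Ici i, ∑ l ∈ Finset.Ici j, θ k l ^ 2 := by
        refine Finset.sum_le_sum fun k hk => Finset.sum_le_sum fun l hl => ?_
        have := hθ (Finset.mem_Ici.1 hk) (Finset.mem_Ici.1 hl)
        rw [← sq_abs (θ k l)]
        gcongr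
        exact max_le (this.trans (le_abs_self _)) (abs_nonneg _)
    _ ≤ ∑ k ∈ Finset.Ici i, ∑ l, θ k l ^ 2 := Finset.sum_le_sum fun k _ =>
        Finset.sum_le_sum_of_subset_of_nonneg (Finset.subset_univ _) fun _ _ _ => sq_nonneg _
    _ ≤ _ := Finset.sum_le_sum_of_subset_of_nonneg (Finset.subset_univ _) fun _ _ _ =>
        Finset.sum_nonneg fun _ _ => sq_nonneg _

lemma Isotonic.mul_sq_reversedPosPart_le {n1 n2 : ℕ} {θ : Fin n1 → Fin n2 → ℝ} (hθ : Isotonic θ)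
    (h1 : frobSq θ ≤ 1) (p q : ℕ) :
    ((p : ℝ) + 1) * (q + 1) * reversedPosPart θ (p, q) ^ 2 ≤ 1 := by
  unfold reversedPosPart
  split_ifs with h
  · simpa only [Fin.rev_rev] using
      (hθ.mul_sq_le_frobSq (Fin.rev ⟨p, h.1⟩) (Fin.rev ⟨q, h.2⟩)).trans h1
  · simp

lemma exists_finset_posPart_net {n1 n2 A B : ℕ} (hA : n1 < 2 ^ A) (hB : n2 < 2 ^ B) (S : ℕ) {τ : ℝ}
    (hτ : 0 < τ) :
    ∃ G : Finset (Fin n1 → Fin n2 → ℝ),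
      (G.card : ℝ) ≤ Real.exp (A * B * ((S + 1) * (2 / τ))) ∧
      ∀ θ : Fin n1 → Fin n2 → ℝ, Isotonic θ → frobSq θ ≤ 1 →
        ∃ g ∈ G, ∑ i, ∑ j, (max (θ i j) 0 - g i j) ^ 2 ≤
          A * B * (4 / 2 ^ S + 64 * τ * (S + 1)) := by
  classical
  choose N hcard hN using fun ab : ℕ × ℕ => exists_finset_block_net ab.1 ab.2 S hτ
  set ext : (Fin A × Fin B → ℕ × ℕ → ℝ) → ℕ × ℕ → ℕ × ℕ → ℝ := fun g ab =>
    if h : ab.1 < A ∧ ab.2 < B then g (⟨ab.1, h.1⟩, ⟨ab.2, h.2⟩) else 0 with ext_def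
  set glue : (Fin A × Fin B → ℕ × ℕ → ℝ) → ℕ → ℕ → ℝ := fun g p q =>
    ext g (Nat.log 2 p, Nat.log 2 q) (p - 2 ^ Nat.log 2 p, q - 2 ^ Nat.log 2 q) /
      √(2 ^ Nat.log 2 p * 2 ^ Nat.log 2 q) with glue_def
  set decode : (Fin A × Fin B → ℕ × ℕ → ℝ) → Fin n1 → Fin n2 → ℝ := fun g i j =>
    glue g (Fin.rev i + 1) (Fin.rev j + 1) with decode_def
  refine ⟨(Fintype.piFinset fun ab : Fin A × Fin B => N (ab.1, ab.2)).image decode, ?_,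
    fun θ hθ hθ1 => ?_⟩
  · calc _ ≤ ((Fintype.piFinset fun ab : Fin A × Fin B => N (ab.1, ab.2)).card : ℝ) := by
          exact_mod_cast Finset.card_image_le
      _ = ∏ ab : Fin A × Fin B, ((N (ab.1, ab.2)).card : ℝ) := by
          rw [Fintype.card_piFinset]; push_cast; rfl
      _ ≤ ∏ ab : Fin A × Fin B, Real.exp ((S + 1) * (2 / τ)) :=
          Finset.prod_le_prod (fun _ _ => by positivity) fun s _ => hcard _
      _ = _ := by
          rw [Finset.prod_const, ← Real.exp_nat_mul]
          simp
  · set F : ℕ × ℕ → ℕ × ℕ → ℝ := fun ab z =>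
      √(2 ^ ab.1 * 2 ^ ab.2) * reversedPosPart θ (2 ^ ab.1 + z.1 - 1, 2 ^ ab.2 + z.2 - 1) with F_def
    have hF : ∀ ab, Antitone (F ab) := fun ab u v huv => by
      have hle : reversedPosPart θ (2 ^ ab.1 + v.1 - 1, 2 ^ ab.2 + v.2 - 1) ≤
          reversedPosPart θ (2 ^ ab.1 + u.1 - 1, 2 ^ ab.2 + u.2 - 1) :=
        hθ.antitone_reversedPosPart
          ⟨Nat.sub_le_sub_right (Nat.add_le_add_left huv.1 _) 1,
            Nat.sub_le_sub_right (Nat.add_le_add_left huv.2 _) 1⟩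
      simp only [F_def]
      gcongr
    have F0 : ∀ ab z, 0 ≤ F ab z := fun ab z =>
      mul_nonneg (Real.sqrt_nonneg _) (reversedPosPart_nonneg _ _)
    have F1 : ∀ ab z, F ab z ≤ 1 := fun ab z => by
      rw [← sq_le_one_iff₀ (F0 ab z)]
      refine le_trans ?_ (hθ.mul_sq_reversedPosPart_le hθ1 (2 ^ ab.1 + z.1 - 1) (2 ^ ab.2 + z.2 - 1))
      have cast_le : ∀ a x : ℕ, (2 : ℝ) ^ a ≤ ((2 ^ a + x - 1 : ℕ) : ℝ) + 1 := fun a x => by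
        have : 1 ≤ 2 ^ a := Nat.one_le_two_pow
        have : 2 ^ a ≤ (2 ^ a + x - 1) + 1 := by omega
        exact_mod_cast this
      simp only [F_def]
      rw [mul_pow, Real.sq_sqrt (by positivity)]
      gcongr
      · exact cast_le _ _
      · exact cast_le _ _
    choose g hgN hg using fun ab => hN ab (F ab) (hF ab) (F0 ab) (F1 ab)
    set G : Fin A × Fin B → ℕ × ℕ → ℝ := fun ab => g (ab.1, ab.2) with G_def
    refine ⟨decode G, Finset.mem_image_of_mem _ (Fintype.mem_piFinset.2 fun ab => hgN _), ?_⟩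
    set φ : ℕ → ℕ → ℝ := fun p q => (reversedPosPart θ (p - 1, q - 1) - glue G p q) ^ 2 with φ_def
    have hφ0 : ∀ p q, 0 ≤ φ p q := fun _ _ => sq_nonneg _
    have hlog : ∀ a x, x < 2 ^ a → Nat.log 2 (2 ^ a + x) = a := fun a x hx =>
      (Nat.log_eq_iff (Or.inr ⟨by norm_num, by positivity⟩)).2
        ⟨Nat.le_add_right _ _, by rw [pow_succ]; omega⟩
    have hφ : ∀ a < A, ∀ b < B, ∀ x < 2 ^ a, ∀ y < 2 ^ b, φ (2 ^ a + x) (2 ^ b + y) =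
        (F (a, b) (x, y) - g (a, b) (x, y)) ^ 2 / (2 ^ a * 2 ^ b) := fun a ha b hb x hx y hy => by
      have hpos : (0 : ℝ) < 2 ^ a * 2 ^ b := by positivity
      have hsq : √(2 ^ a * 2 ^ b : ℝ) ≠ 0 := (Real.sqrt_pos.2 hpos).ne'
      simp only [φ_def, glue_def, ext_def, hlog a x hx, hlog b y hy, ha, hb, and_self, dif_pos,
        Nat.add_sub_cancel_left, G_def, F_def]
      have hr := Real.sq_sqrt hpos.le
      set r := √(2 ^ a * 2 ^ b : ℝ)
      rw [← hr, ← div_pow]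
      congr 1
      field_simp
    calc ∑ i, ∑ j, (max (θ i j) 0 - decode G i j) ^ 2
        = ∑ i : Fin n1, ∑ j : Fin n2, φ (i + 1) (j + 1) := by
          rw [← Equiv.sum_comp Fin.revPerm]
          refine Finset.sum_congr rfl fun i _ => ?_
          rw [← Equiv.sum_comp Fin.revPerm]
          refine Finset.sum_congr rfl fun j _ => ?_
          simp [φ_def, decode_def, reversedPosPart, -Fin.val_rev]
      _ ≤ ∑ a ∈ Finset.range A, ∑ x ∈ Finset.range (2 ^ a), ∑ j : Fin n2, φ (2 ^ a + x) (j + 1) :=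
          sum_fin_succ_le_sum_dyadic (φ := fun p => ∑ j : Fin n2, φ p (j + 1))
            (fun p => Finset.sum_nonneg fun _ _ => hφ0 _ _) hA
      _ ≤ ∑ a ∈ Finset.range A, ∑ x ∈ Finset.range (2 ^ a),
          ∑ b ∈ Finset.range B, ∑ y ∈ Finset.range (2 ^ b), φ (2 ^ a + x) (2 ^ b + y) :=
          Finset.sum_le_sum fun a _ => Finset.sum_le_sum fun x _ =>
            sum_fin_succ_le_sum_dyadic (hφ0 _) hB
      _ = ∑ a ∈ Finset.range A, ∑ b ∈ Finset.range B, ∑ z ∈ dyadicBlock a b,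
          (F (a, b) z - g (a, b) z) ^ 2 / (2 ^ a * 2 ^ b) := by
          refine Finset.sum_congr rfl fun a ha => ?_
          rw [Finset.sum_comm]
          refine Finset.sum_congr rfl fun b hb => ?_
          rw [dyadicBlock, Finset.sum_product]
          refine Finset.sum_congr rfl fun x hx => Finset.sum_congr rfl fun y hy => ?_
          simp only [Finset.mem_range] at ha hb hx hy
          exact hφ a ha b hb x hx y hy
      _ ≤ ∑ a ∈ Finset.range A, ∑ b ∈ Finset.range B, (4 / 2 ^ S + 64 * τ * (S + 1)) := by
          refine Finset.sum_le_sum fun a _ => Finset.sum_le_sum fun b _ => ?_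
          rw [← Finset.sum_div, div_le_iff₀' (by positivity)]
          exact hg (a, b)
      _ = _ := by simp only [Finset.sum_const, Finset.card_range, nsmul_eq_mul]; ring

lemma exists_finset_isotonic_net {n1 n2 A B : ℕ} (hA : n1 < 2 ^ A) (hB : n2 < 2 ^ B) (S : ℕ)
    {τ : ℝ} (hτ : 0 < τ) :
    ∃ G : Finset (Fin n1 → Fin n2 → ℝ),
      (G.card : ℝ) ≤ Real.exp (2 * (A * B * ((S + 1) * (2 / τ)))) ∧
      ∀ θ : Fin n1 → Fin n2 → ℝ, Isotonic θ → frobSq θ ≤ 1 →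
        ∃ g ∈ G, frobSq (θ - g) ≤ 4 * (A * B * (4 / 2 ^ S + 64 * τ * (S + 1))) := by
  classical
  obtain ⟨G, hcard, hG⟩ := exists_finset_posPart_net hA hB S hτ
  refine ⟨(G ×ˢ G).image fun g i j => g.1 i j - g.2 (Fin.rev i) (Fin.rev j), ?_,
    fun θ hθ hθ1 => ?_⟩
  · calc _ ≤ ((G ×ˢ G).card : ℝ) := by exact_mod_cast Finset.card_image_le
      _ = (G.card : ℝ) * G.card := by rw [Finset.card_product]; push_cast; rfl
      _ ≤ Real.exp _ * Real.exp _ := mul_le_mul hcard hcard (by positivity) (by positivity)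
      _ = _ := by rw [← Real.exp_add]; ring_nf
  · have sum_rev : ∀ φ : Fin n1 → Fin n2 → ℝ,
        ∑ i, ∑ j, φ (Fin.rev i) (Fin.rev j) = ∑ i, ∑ j, φ i j := fun φ => by
      rw [← Equiv.sum_comp Fin.revPerm]
      refine Finset.sum_congr rfl fun i _ => ?_
      rw [← Equiv.sum_comp Fin.revPerm]
      simp
    obtain ⟨g, hg, hgθ⟩ := hG θ hθ hθ1
    obtain ⟨g', hg', hgθ'⟩ := hG (fun i j => -θ (Fin.rev i) (Fin.rev j))
      (fun i k j l hik hjl => neg_le_neg (hθ (Fin.rev_le_rev.2 hik) (Fin.rev_le_rev.2 hjl)))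
      (by
        refine le_trans (le_of_eq ?_) hθ1
        simp only [frobSq, neg_sq]
        exact sum_rev fun i j => θ i j ^ 2)
    refine ⟨_, Finset.mem_image_of_mem _ (Finset.mk_mem_product hg hg'), ?_⟩
    rw [← sum_rev] at hgθ'
    simp only [Fin.rev_rev] at hgθ'
    calc _ ≤ ∑ i, ∑ j, (2 * (max (θ i j) 0 - g i j) ^ 2 +
          2 * (max (-θ i j) 0 - g' (Fin.rev i) (Fin.rev j)) ^ 2) := by
          refine Finset.sum_le_sum fun i _ => Finset.sum_le_sum fun j _ => ?_
          have e : θ i j = max (θ i j) 0 - max (-θ i j) 0 := (max_zero_sub_max_neg_zero_eq_self _).symm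
          simp only [Pi.sub_apply]
          nth_rewrite 1 [e]
          nlinarith [sq_nonneg ((max (θ i j) 0 - g i j) +
            (max (-θ i j) 0 - g' (Fin.rev i) (Fin.rev j)))]
      _ = 2 * ∑ i, ∑ j, (max (θ i j) 0 - g i j) ^ 2 +
          2 * ∑ i, ∑ j, (max (-θ i j) 0 - g' (Fin.rev i) (Fin.rev j)) ^ 2 := by
          simp only [Finset.sum_add_distrib, Finset.mul_sum]
      _ ≤ _ := by linarith

lemma coverNum_le_card {n1 n2 : ℕ} {ε : ℝ} {F : Set (Fin n1 → Fin n2 → ℝ)}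
    {G : Finset (Fin n1 → Fin n2 → ℝ)} (hG : ∀ θ ∈ F, ∃ g ∈ G, frobSq (θ - g) ≤ ε ^ 2) :
    coverNum ε F ≤ G.card :=
  Nat.sInf_le ⟨G, rfl, hG⟩

lemma natLog_two_add_one_le {n : ℕ} (hn : 1 < n) : ((Nat.log 2 n + 1 : ℕ) : ℝ) ≤ 3 * Real.log n := by
  have h1 : (1 : ℝ) ≤ Nat.log 2 n := by
    exact_mod_cast Nat.log_pos (by norm_num) hn
  have h2 : (Nat.log 2 n : ℝ) * Real.log 2 ≤ Real.log n := by
    rw [← Real.log_pow]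
    refine Real.log_le_log (by positivity) ?_
    exact_mod_cast Nat.pow_log_le_self 2 (by omega)
  have h3 := Real.log_two_gt_d9
  push_cast
  nlinarith

lemma eighteen_mul_sq_le_two_pow {X : ℝ} (hX : Real.exp 1 ≤ X) :
    18 * X ^ 2 ≤ 2 ^ ⌈8 * Real.log X⌉₊ := by
  have hX0 : 0 < X := (Real.exp_pos 1).trans_le hX
  have hlog : 1 ≤ Real.log X := (Real.le_log_iff_exp_le hX0).2 hX
  have h27 := Real.exp_one_gt_d9
  calc 18 * X ^ 2 ≤ X ^ 3 * X ^ 2 := by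
        gcongr
        calc (18 : ℝ) ≤ 2.7 ^ 3 := by norm_num
          _ ≤ X ^ 3 := by gcongr; linarith
    _ = Real.exp (5 * Real.log X) := by
        rw [← pow_add, mul_comm, ← Real.rpow_def_of_pos hX0]
        norm_cast
    _ ≤ Real.exp (Real.log 2 * ⌈8 * Real.log X⌉₊) := by
        refine Real.exp_le_exp.2 ?_
        have := Nat.le_ceil (8 * Real.log X)
        have := Real.log_two_gt_d9
        nlinarith
    _ = _ := by rw [← Real.rpow_def_of_pos (by norm_num), Real.rpow_natCast]

/-- **Theorem 5, inequality (sdb.eq) (metric entropy of the isotonic Frobenius ball).**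
There is a universal constant `C > 0` such that for every `ε > 0` and all
`n1, n2 > 1`,
`log N(ε, B(0,1)) ≤ C (log n1)² (log n2)² / ε² · [log(4 sqrt(log n1 log n2)/ε)]²`. -/
theorem isotonic_ball_metric_entropy :
    ∃ C : ℝ, 0 < C ∧
      ∀ (n1 n2 : ℕ), 1 < n1 → 1 < n2 → ∀ ε : ℝ, 0 < ε →
        Real.log (coverNum ε {θ : Fin n1 → Fin n2 → ℝ | Isotonic θ ∧ frobSq θ ≤ 1}) ≤
          C * (Real.log n1 ^ 2 * Real.log n2 ^ 2 / ε ^ 2) *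
            Real.log (4 * Real.sqrt (Real.log n1 * Real.log n2) / ε) ^ 2 := by
  refine ⟨2048 * 81 * 100, by norm_num, fun n1 n2 hn1 hn2 ε hε => ?_⟩
  rcases le_or_gt 1 ε with hε1 | hε1
  · have hle : coverNum ε {θ : Fin n1 → Fin n2 → ℝ | Isotonic θ ∧ frobSq θ ≤ 1} ≤ 1 :=
      coverNum_le_card (G := {0}) fun θ hθ =>
        ⟨0, by simp, by rw [sub_zero]; exact hθ.2.trans (one_le_pow₀ hε1)⟩
    refine le_trans (Real.log_nonpos (Nat.cast_nonneg _) (by exact_mod_cast hle)) ?_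
    positivity
  have hl2 := Real.log_two_gt_d9
  have hL1 : Real.log 2 ≤ Real.log n1 :=
    Real.log_le_log (by norm_num) (by exact_mod_cast hn1)
  have hL2 : Real.log 2 ≤ Real.log n2 :=
    Real.log_le_log (by norm_num) (by exact_mod_cast hn2)
  set A := Nat.log 2 n1 + 1
  set B := Nat.log 2 n2 + 1
  have hAn : n1 < 2 ^ A := Nat.lt_pow_succ_log_self (by norm_num) n1
  have hBn : n2 < 2 ^ B := Nat.lt_pow_succ_log_self (by norm_num) n2
  have hA : (A : ℝ) ≤ 3 * Real.log n1 := natLog_two_add_one_le hn1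
  have hB : (B : ℝ) ≤ 3 * Real.log n2 := natLog_two_add_one_le hn2
  have hA0 : (0 : ℝ) < A := by positivity
  have hB0 : (0 : ℝ) < B := by positivity
  set L1 := Real.log n1
  set L2 := Real.log n2
  have hLL : 0 < L1 * L2 := by nlinarith
  set X := 4 * √(L1 * L2) / ε with X_def
  have hX : Real.exp 1 ≤ X := by
    have h1 : 0.6931 ≤ √(L1 * L2) := Real.le_sqrt_of_sq_le (by nlinarith)
    have h2 := Real.exp_one_lt_d9
    rw [X_def, le_div_iff₀ hε]
    nlinarith
  have hX2 : X ^ 2 = 16 * (L1 * L2) / ε ^ 2 := by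
    rw [X_def, div_pow, mul_pow, Real.sq_sqrt hLL.le]
    norm_num
  have hlogX : 1 ≤ Real.log X :=
    (Real.le_log_iff_exp_le ((Real.exp_pos 1).trans_le hX)).2 hX
  set S := ⌈8 * Real.log X⌉₊
  have hS : (S : ℝ) + 1 ≤ 10 * Real.log X := by
    have := Nat.ceil_lt_add_one (a := 8 * Real.log X) (by positivity)
    linarith
  have hAB : (A : ℝ) * B ≤ 9 * (L1 * L2) := by
    calc (A : ℝ) * B ≤ (3 * L1) * (3 * L2) := mul_le_mul hA hB hB0.le (by linarith)
      _ = _ := by ring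
  have hpow : 32 * (A * B) ≤ ε ^ 2 * 2 ^ S := by
    calc 32 * ((A : ℝ) * B) ≤ 32 * (9 * (L1 * L2)) := by gcongr
      _ = ε ^ 2 * (18 * X ^ 2) := by rw [hX2]; field_simp; ring
      _ ≤ _ := by gcongr; exact eighteen_mul_sq_le_two_pow hX
  obtain ⟨G, hcard, hG⟩ := exists_finset_isotonic_net hAn hBn S
    (τ := ε ^ 2 / (512 * (A * B) * (S + 1))) (by positivity)
  have hcover : coverNum ε {θ : Fin n1 → Fin n2 → ℝ | Isotonic θ ∧ frobSq θ ≤ 1} ≤ G.card := by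
    refine coverNum_le_card fun θ hθ => ?_
    obtain ⟨g, hg, hgθ⟩ := hG θ hθ.1 hθ.2
    refine ⟨g, hg, hgθ.trans ?_⟩
    calc _ = 16 * (A * B) / 2 ^ S + ε ^ 2 / 2 := by field_simp; ring
      _ ≤ ε ^ 2 / 2 + ε ^ 2 / 2 := by
          refine add_le_add_left ?_ _
          rw [div_le_iff₀ (by positivity)]
          linarith
      _ = ε ^ 2 := by ring
  calc Real.log (coverNum ε {θ : Fin n1 → Fin n2 → ℝ | Isotonic θ ∧ frobSq θ ≤ 1})
      ≤ 2 * (A * B * ((S + 1) * (2 / (ε ^ 2 / (512 * (A * B) * (S + 1)))))) := by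
        rcases Nat.eq_zero_or_pos
          (coverNum ε {θ : Fin n1 → Fin n2 → ℝ | Isotonic θ ∧ frobSq θ ≤ 1}) with h0 | h0
        · rw [h0, Nat.cast_zero, Real.log_zero]
          positivity
        · rw [Real.log_le_iff_le_exp (by exact_mod_cast h0)]
          exact le_trans (by exact_mod_cast hcover) hcard
    _ = 2048 * (A * B) ^ 2 * (S + 1) ^ 2 / ε ^ 2 := by field_simp; norm_num
    _ ≤ 2048 * (9 * (L1 * L2)) ^ 2 * (10 * Real.log X) ^ 2 / ε ^ 2 := by gcongr
    _ = _ := by ring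
end
end

section
/- For every isotonic matrix θ ∈ M with Frobenius norm at most 1 (i.e., Σ_{i,j} θ_{ij}² ≤ 1), and for every 1 ≤ i ≤ n1 and 1 ≤ j ≤ n2, the entrywise bound |θ_{ij}| ≤ max( 1/sqrt(i·j), 1/sqrt((n1 − i + 1)(n2 − j + 1)) ) holds. -/
open MeasureTheory ProbabilityTheory

noncomputable section

/-- A constant bound on the squares over a rectangle of entries bounds the squared Frobenius norm. -/
lemma card_mul_card_mul_sq_le_frobSq {n1 n2 : ℕ} (θ : Fin n1 → Fin n2 → ℝ) (c : ℝ)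
    (s : Finset (Fin n1)) (t : Finset (Fin n2)) (h : ∀ i ∈ s, ∀ j ∈ t, c ^ 2 ≤ θ i j ^ 2) :
    (s.card : ℝ) * t.card * c ^ 2 ≤ frobSq θ := by
  calc (s.card : ℝ) * t.card * c ^ 2 = ∑ _i ∈ s, ∑ _j ∈ t, c ^ 2 := by
        simp [mul_assoc]
    _ ≤ ∑ i ∈ s, ∑ j ∈ t, θ i j ^ 2 :=
        Finset.sum_le_sum fun i hi => Finset.sum_le_sum fun j hj => h i hi j hj
    _ ≤ ∑ i ∈ s, ∑ j, θ i j ^ 2 :=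
        Finset.sum_le_sum fun i _ => Finset.sum_le_sum_of_subset_of_nonneg
          (Finset.subset_univ t) fun j _ _ => sq_nonneg _
    _ ≤ frobSq θ :=
        Finset.sum_le_sum_of_subset_of_nonneg (Finset.subset_univ s)
          fun i _ _ => Finset.sum_nonneg fun j _ => sq_nonneg _

lemma abs_le_one_div_sqrt {a x : ℝ} (ha : 0 < a) (h : a * x ^ 2 ≤ 1) :
    |x| ≤ 1 / Real.sqrt a := by
  rw [← Real.sqrt_one, ← Real.sqrt_div zero_le_one]
  exact Real.abs_le_sqrt ((le_div_iff₀' ha).2 h)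

/-- **Lemma 2 (entrywise bound on the Frobenius unit ball).** For every isotonic matrix
`θ` with `Σ_{i,j} θ_{ij}² ≤ 1` and all indices `i, j` (here `0`-based, so the
`1`-based index `i` of the paper is `i+1`),
`|θ_{ij}| ≤ max(1/sqrt(i j), 1/sqrt((n1 − i + 1)(n2 − j + 1)))`. -/
theorem isotonic_ball_entrywise_bound {n1 n2 : ℕ}
    (θ : Fin n1 → Fin n2 → ℝ) (hθ : Isotonic θ) (hball : frobSq θ ≤ 1)
    (i : Fin n1) (j : Fin n2) :
    |θ i j| ≤ max (1 / Real.sqrt ((i.1 + 1) * (j.1 + 1)))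
        (1 / Real.sqrt ((n1 - i.1) * (n2 - j.1))) := by
  rcases le_total 0 (θ i j) with h0 | h0
  · refine le_max_of_le_right (abs_le_one_div_sqrt ?_ ?_)
    · exact mul_pos (sub_pos.2 (by exact_mod_cast i.2)) (sub_pos.2 (by exact_mod_cast j.2))
    · have h := card_mul_card_mul_sq_le_frobSq θ (θ i j) (Finset.Ici i) (Finset.Ici j)
        fun k hk l hl =>
          pow_le_pow_left₀ h0 (hθ (Finset.mem_Ici.1 hk) (Finset.mem_Ici.1 hl)) 2
      rw [Fin.card_Ici, Fin.card_Ici, Nat.cast_sub i.2.le, Nat.cast_sub j.2.le] at h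
      exact h.trans hball
  · refine le_max_of_le_left (abs_le_one_div_sqrt (by positivity) ?_)
    have h := card_mul_card_mul_sq_le_frobSq θ (θ i j) (Finset.Iic i) (Finset.Iic j)
      fun k hk l hl => by
        have hle := hθ (Finset.mem_Iic.1 hk) (Finset.mem_Iic.1 hl)
        exact sq_le_sq' (by linarith) (by linarith) |>.trans_eq (neg_sq (θ k l))
    rw [Fin.card_Iic, Fin.card_Iic] at h
    push_cast at h
    exact h.trans hball
end
end

section
/- For every θ* ∈ M, the risk of the isotonic least squares estimator satisfies R(θ*, θ̂) ≤ (1/n) · inf over θ ∈ M of ( ||θ* − θ||² + E|| Π(ε, T_M(θ)) ||² ), where Π(ε, T_M(θ)) is the Euclidean projection of the noise matrix ε onto the tangent cone T_M(θ) and the expectation is over ε. -/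
open MeasureTheory ProbabilityTheory

noncomputable section

/-- The tangent cone of the isotonic cone `M` at `θ`: the closure of
`{α (u − θ) : α > 0, u ∈ M}`. -/
def tangentCone {n1 n2 : ℕ} (θ : Fin n1 → Fin n2 → ℝ) : Set (Fin n1 → Fin n2 → ℝ) :=
  closure {v | ∃ α : ℝ, 0 < α ∧ ∃ u, Isotonic u ∧ v = α • (u - θ)}

/-- The Euclidean (Frobenius) projection of `v` onto a set `K`: the point of `K`
minimizing the squared Frobenius distance to `v` (when such a point exists and is
unique, `Classical.epsilon` returns it). -/
def projC {n1 n2 : ℕ} (K : Set (Fin n1 → Fin n2 → ℝ)) (v : Fin n1 → Fin n2 → ℝ) :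
    Fin n1 → Fin n2 → ℝ :=
  Classical.epsilon fun p => p ∈ K ∧ ∀ u ∈ K, frobSq (v - p) ≤ frobSq (v - u)

/-- Frobenius inner product of two matrices. -/
def frobInner {n1 n2 : ℕ} (a b : Fin n1 → Fin n2 → ℝ) : ℝ :=
  ∑ i, ∑ j, a i j * b i j

section Frobenius

variable {n1 n2 : ℕ}

lemma frobSq_nonneg (a : Fin n1 → Fin n2 → ℝ) : 0 ≤ frobSq a :=
  Finset.sum_nonneg fun _ _ => Finset.sum_nonneg fun _ _ => sq_nonneg _

lemma continuous_frobSq : Continuous (frobSq : (Fin n1 → Fin n2 → ℝ) → ℝ) := by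
  unfold frobSq
  fun_prop

lemma continuous_frobInner_left (b : Fin n1 → Fin n2 → ℝ) :
    Continuous fun a => frobInner a b := by
  unfold frobInner
  fun_prop

lemma frobSq_sub_smul (a b : Fin n1 → Fin n2 → ℝ) (t : ℝ) :
    frobSq (a - t • b) = frobSq a - 2 * t * frobInner a b + t ^ 2 * frobSq b := by
  simp only [frobSq, frobInner, Finset.mul_sum, ← Finset.sum_sub_distrib,
    ← Finset.sum_add_distrib, Pi.sub_apply, Pi.smul_apply, smul_eq_mul]
  exact Finset.sum_congr rfl fun i _ => Finset.sum_congr rfl fun j _ => by ring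

lemma frobSq_sub (a b : Fin n1 → Fin n2 → ℝ) :
    frobSq (a - b) = frobSq a - 2 * frobInner a b + frobSq b := by
  simpa using frobSq_sub_smul a b 1

lemma norm_sq_le_frobSq (a : Fin n1 → Fin n2 → ℝ) : ‖a‖ ^ 2 ≤ frobSq a := by
  have h : ‖a‖ ≤ √(frobSq a) := by
    refine (pi_norm_le_iff_of_nonneg (Real.sqrt_nonneg _)).2 fun i =>
      (pi_norm_le_iff_of_nonneg (Real.sqrt_nonneg _)).2 fun j => ?_
    refine Real.le_sqrt_of_sq_le ?_
    rw [Real.norm_eq_abs, sq_abs]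
    calc a i j ^ 2 ≤ ∑ j, a i j ^ 2 :=
          Finset.single_le_sum (f := fun j => a i j ^ 2) (fun _ _ => sq_nonneg _)
            (Finset.mem_univ j)
      _ ≤ frobSq a :=
          Finset.single_le_sum (f := fun i => ∑ j, a i j ^ 2)
            (fun _ _ => Finset.sum_nonneg fun _ _ => sq_nonneg _) (Finset.mem_univ i)
  calc ‖a‖ ^ 2 ≤ √(frobSq a) ^ 2 := by gcongr
    _ = frobSq a := Real.sq_sqrt (frobSq_nonneg a)

/-- First-order condition: moving from `a` in direction `-b` does not decrease the squared norm
only if `a` and `b` make an obtuse angle. -/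
lemma frobInner_nonpos_of_forall_le {a b : Fin n1 → Fin n2 → ℝ}
    (h : ∀ t : ℝ, 0 < t → t < 1 → frobSq a ≤ frobSq (a - t • b)) : frobInner a b ≤ 0 := by
  by_contra! hc
  have hd := frobSq_nonneg b
  set c := frobInner a b
  set d := frobSq b
  have hpos : 0 < c + d + 1 := by positivity
  have ht : 0 < c / (c + d + 1) := by positivity
  have h1 := h (c / (c + d + 1)) ht (by rw [div_lt_one hpos]; linarith)
  rw [frobSq_sub_smul] at h1
  have h2 : 0 ≤ c / (c + d + 1) * (c / (c + d + 1) * d - 2 * c) := by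
    linear_combination h1
  have h3 := nonneg_of_mul_nonneg_right h2 ht
  have h4 : c / (c + d + 1) * d ≤ c := by
    rw [div_mul_eq_mul_div, div_le_iff₀ hpos]
    nlinarith
  linarith

lemma exists_frobSq_minimizer {K : Set (Fin n1 → Fin n2 → ℝ)} (hK : IsClosed K)
    (hne : K.Nonempty) (v : Fin n1 → Fin n2 → ℝ) :
    ∃ p, p ∈ K ∧ ∀ u ∈ K, frobSq (v - p) ≤ frobSq (v - u) := by
  have hcont : Continuous fun u => frobSq (v - u) :=
    continuous_frobSq.comp (continuous_const.sub continuous_id)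
  obtain ⟨u₀, hu₀⟩ := hne
  have hcomp : IsCompact (K ∩ {u | frobSq (v - u) ≤ frobSq (v - u₀)}) := by
    refine Metric.isCompact_of_isClosed_isBounded
      (hK.inter (isClosed_le hcont continuous_const)) ?_
    refine Metric.isBounded_closedBall.subset (t := Metric.closedBall v √(frobSq (v - u₀))) ?_
    rintro u ⟨-, hu⟩
    rw [Metric.mem_closedBall, dist_comm, dist_eq_norm]
    exact Real.le_sqrt_of_sq_le ((norm_sq_le_frobSq _).trans hu)
  obtain ⟨p, hp, hmin⟩ := hcomp.exists_isMinOn ⟨u₀, hu₀, le_refl (frobSq (v - u₀))⟩ hcont.continuousOn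
  refine ⟨p, hp.1, fun u hu => ?_⟩
  rcases le_total (frobSq (v - u)) (frobSq (v - u₀)) with h | h
  · exact hmin ⟨hu, h⟩
  · exact hp.2.trans h

lemma projC_spec {K : Set (Fin n1 → Fin n2 → ℝ)} (hK : IsClosed K)
    (hne : K.Nonempty) (v : Fin n1 → Fin n2 → ℝ) :
    projC K v ∈ K ∧ ∀ u ∈ K, frobSq (v - projC K v) ≤ frobSq (v - u) :=
  Classical.epsilon_spec (exists_frobSq_minimizer hK hne v)

end Frobenius

section Cone

variable {n1 n2 : ℕ} {K : Set (Fin n1 → Fin n2 → ℝ)}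

lemma frobInner_projC_self (hK : IsClosed K) (hne : K.Nonempty)
    (hcone : ∀ t : ℝ, 0 < t → ∀ u ∈ K, t • u ∈ K) (v : Fin n1 → Fin n2 → ℝ) :
    frobInner v (projC K v) = frobSq (projC K v) := by
  obtain ⟨hp, hmin⟩ := projC_spec hK hne v
  set p := projC K v
  have h1 : frobInner (v - p) p ≤ 0 := frobInner_nonpos_of_forall_le fun t ht _ => by
    convert hmin _ (hcone (1 + t) (by linarith) p hp) using 2
    module
  have h2 : frobInner (v - p) (-p) ≤ 0 := frobInner_nonpos_of_forall_le fun t _ ht => by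
    convert hmin _ (hcone (1 - t) (by linarith) p hp) using 2
    module
  have h3 : frobInner (v - p) (-p) = -frobInner (v - p) p := by
    simp [frobInner, Finset.sum_neg_distrib]
  have h4 : frobInner (v - p) p = frobInner v p - frobSq p := by
    simp only [frobInner, frobSq, ← Finset.sum_sub_distrib, Pi.sub_apply]
    exact Finset.sum_congr rfl fun i _ => Finset.sum_congr rfl fun j _ => by ring
  linarith

/-- Variational lower bound for the squared norm of the projection onto a closed cone. -/
lemma two_mul_frobInner_sub_frobSq_le (hK : IsClosed K) (hne : K.Nonempty)
    (hcone : ∀ t : ℝ, 0 < t → ∀ u ∈ K, t • u ∈ K) (v : Fin n1 → Fin n2 → ℝ)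
    {u : Fin n1 → Fin n2 → ℝ} (hu : u ∈ K) :
    2 * frobInner v u - frobSq u ≤ frobSq (projC K v) := by
  have h := (projC_spec hK hne v).2 u hu
  rw [frobSq_sub, frobSq_sub, frobInner_projC_self hK hne hcone] at h
  linarith

lemma frobSq_projC_le (hK : IsClosed K) (hne : K.Nonempty)
    (hcone : ∀ t : ℝ, 0 < t → ∀ u ∈ K, t • u ∈ K) (v : Fin n1 → Fin n2 → ℝ) :
    frobSq (projC K v) ≤ frobSq v := by
  have h := frobSq_nonneg (v - projC K v)
  rw [frobSq_sub, frobInner_projC_self hK hne hcone] at h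
  linarith

lemma measurable_frobSq_projC (hK : IsClosed K) (hne : K.Nonempty)
    (hcone : ∀ t : ℝ, 0 < t → ∀ u ∈ K, t • u ∈ K) :
    Measurable fun v => frobSq (projC K v) := by
  refine measurable_of_Ioi fun a => IsOpen.measurableSet ?_
  have heq : (fun v => frobSq (projC K v)) ⁻¹' Set.Ioi a =
      ⋃ u ∈ K, {v | a < 2 * frobInner v u - frobSq u} := by
    ext v
    simp only [Set.mem_preimage, Set.mem_Ioi, Set.mem_iUnion, Set.mem_ofPred_eq, exists_prop]
    constructor
    · intro h
      refine ⟨projC K v, (projC_spec hK hne v).1, ?_⟩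
      rw [frobInner_projC_self hK hne hcone]
      linarith
    · rintro ⟨u, hu, h⟩
      exact h.trans_le (two_mul_frobInner_sub_frobSq_le hK hne hcone v hu)
  rw [heq]
  exact isOpen_biUnion fun u _ => isOpen_lt continuous_const
    ((continuous_const.mul (continuous_frobInner_left u)).sub continuous_const)

end Cone

section Isotonic

variable {n1 n2 : ℕ}

lemma Isotonic.add_smul_sub {θ η : Fin n1 → Fin n2 → ℝ} (hθ : Isotonic θ) (hη : Isotonic η)
    {t : ℝ} (h0 : 0 ≤ t) (h1 : t ≤ 1) : Isotonic (θ + t • (η - θ)) := by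
  intro i k j l hik hjl
  simp only [Pi.add_apply, Pi.smul_apply, Pi.sub_apply, smul_eq_mul]
  nlinarith [mul_le_mul_of_nonneg_left (hθ hik hjl) (sub_nonneg.2 h1),
    mul_le_mul_of_nonneg_left (hη hik hjl) h0]

lemma sub_mem_tangentCone (θ : Fin n1 → Fin n2 → ℝ) {u : Fin n1 → Fin n2 → ℝ}
    (hu : Isotonic u) : u - θ ∈ tangentCone θ :=
  subset_closure ⟨1, one_pos, u, hu, (one_smul ℝ _).symm⟩

lemma smul_mem_tangentCone (θ : Fin n1 → Fin n2 → ℝ) (t : ℝ) (ht : 0 < t)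
    (u : Fin n1 → Fin n2 → ℝ) (hu : u ∈ tangentCone θ) : t • u ∈ tangentCone θ := by
  refine map_mem_closure (continuous_const_smul t) hu ?_
  rintro _ ⟨α, hα, w, hw, rfl⟩
  exact ⟨t * α, mul_pos ht hα, w, hw, smul_smul _ _ _⟩

lemma IsLSE.frobInner_nonpos {lse : (Fin n1 → Fin n2 → ℝ) → Fin n1 → Fin n2 → ℝ}
    (hlse : IsLSE lse) (y : Fin n1 → Fin n2 → ℝ) {θ : Fin n1 → Fin n2 → ℝ} (hθ : Isotonic θ) :
    frobInner (y - lse y) (θ - lse y) ≤ 0 :=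
  frobInner_nonpos_of_forall_le fun t h0 h1 => by
    convert (hlse y).2 _ ((hlse y).1.add_smul_sub hθ h0.le h1.le) using 2
    module

/-- Pointwise oracle inequality for the least squares estimator. -/
lemma IsLSE.frobSq_sub_le {lse : (Fin n1 → Fin n2 → ℝ) → Fin n1 → Fin n2 → ℝ}
    (hlse : IsLSE lse) (θstar ε : Fin n1 → Fin n2 → ℝ) {θ : Fin n1 → Fin n2 → ℝ}
    (hθ : Isotonic θ) :
    frobSq (lse (θstar + ε) - θstar) ≤
      frobSq (θstar - θ) + frobSq (projC (tangentCone θ) ε) := by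
  have h1 := hlse.frobInner_nonpos (θstar + ε) hθ
  have hmem := sub_mem_tangentCone θ (hlse (θstar + ε)).1
  set p := lse (θstar + ε)
  have h2 := two_mul_frobInner_sub_frobSq_le (K := tangentCone θ) isClosed_closure ⟨_, hmem⟩
    (smul_mem_tangentCone θ) ε hmem
  have h3 : frobSq (p - θstar) = frobSq (θstar - θ) + 2 * frobInner (θstar + ε - p) (θ - p) +
      (2 * frobInner ε (p - θ) - frobSq (p - θ)) := by
    simp only [frobSq, frobInner, Finset.mul_sum, ← Finset.sum_sub_distrib,
      ← Finset.sum_add_distrib, Pi.sub_apply, Pi.add_apply]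
    exact Finset.sum_congr rfl fun i _ => Finset.sum_congr rfl fun j _ => by ring
  linarith

end Isotonic

instance (n1 n2 : ℕ) (σ : ℝ) : IsProbabilityMeasure (noiseMeasure n1 n2 σ) := by
  have : IsProbabilityMeasure (gaussianReal 0 ⟨σ ^ 2, sq_nonneg σ⟩) :=
    instIsProbabilityMeasureGaussianReal _ _
  unfold noiseMeasure
  infer_instance

lemma integrable_frobSq_noiseMeasure (n1 n2 : ℕ) (σ : ℝ) :
    Integrable frobSq (noiseMeasure n1 n2 σ) := by
  refine integrable_finsetSum _ fun i _ => integrable_finsetSum _ fun j _ => ?_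
  have : IsProbabilityMeasure (gaussianReal 0 ⟨σ ^ 2, sq_nonneg σ⟩) :=
    instIsProbabilityMeasureGaussianReal _ _
  have hmp : MeasurePreserving (fun a : Fin n1 → Fin n2 → ℝ => a i j) (noiseMeasure n1 n2 σ)
      (gaussianReal 0 ⟨σ ^ 2, sq_nonneg σ⟩) :=
    (measurePreserving_eval (fun _ : Fin n2 => gaussianReal 0 ⟨σ ^ 2, sq_nonneg σ⟩) j).comp
      (measurePreserving_eval (fun _ : Fin n1 => Measure.pi fun _ : Fin n2 =>
        gaussianReal 0 ⟨σ ^ 2, sq_nonneg σ⟩) i)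
  exact hmp.integrable_comp_of_integrable
    (memLp_id_gaussianReal (μ := 0) (v := ⟨σ ^ 2, sq_nonneg σ⟩) 2).integrable_sq

/-- **Lemma 3 (risk bound via tangent cones).** For every isotonic `θ*`, the least
squares estimator satisfies, for every isotonic `θ`,
`R(θ*, θ̂) ≤ (‖θ* − θ‖² + E‖Π(ε, T_M(θ))‖²) / n` with `n = n1 n2`
(equivalently, `R(θ*, θ̂)` is at most `(1/n)` times the infimum over `θ ∈ M` of the
right-hand side). -/
theorem isotonic_lse_tangent_cone_risk_bound
    {n1 n2 : ℕ} (hn1 : 1 < n1) (hn2 : 1 < n2) (σ : ℝ) (hσ : 0 < σ)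
    (θstar : Fin n1 → Fin n2 → ℝ) (hθstar : Isotonic θstar)
    (lse : (Fin n1 → Fin n2 → ℝ) → Fin n1 → Fin n2 → ℝ) (hlse : IsLSE lse)
    (θ : Fin n1 → Fin n2 → ℝ) (hθ : Isotonic θ) :
    risk σ θstar lse ≤
      (frobSq (θstar - θ) +
        ∫ ε, frobSq (projC (tangentCone θ) ε) ∂noiseMeasure n1 n2 σ) / (n1 * n2) := by
  have hne : (tangentCone θ).Nonempty := ⟨_, sub_mem_tangentCone θ hθ⟩
  have hint : Integrable (fun ε => frobSq (projC (tangentCone θ) ε)) (noiseMeasure n1 n2 σ) := by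
    refine (integrable_frobSq_noiseMeasure n1 n2 σ).mono'
      (measurable_frobSq_projC isClosed_closure hne (smul_mem_tangentCone θ)).aestronglyMeasurable
      (ae_of_all _ fun ε => ?_)
    rw [Real.norm_of_nonneg (frobSq_nonneg _)]
    exact frobSq_projC_le isClosed_closure hne (smul_mem_tangentCone θ) ε
  have hle := integral_mono_of_nonneg
    (ae_of_all (noiseMeasure n1 n2 σ) fun ε => frobSq_nonneg (lse (θstar + ε) - θstar))
    ((integrable_const (frobSq (θstar - θ))).add hint)
    (ae_of_all _ fun ε => hlse.frobSq_sub_le θstar ε hθ)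
  simp only [Pi.add_apply] at hle
  rw [integral_add (integrable_const _) hint, integral_const, probReal_univ, one_smul] at hle
  exact div_le_div_of_nonneg_right hle (by positivity)
end
end
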